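/- arXiv:1707.09550 — 2 statements merged into one kernel-verified Lean document; each statement's English description precedes it below -/
import Mathlib

section
/- Let j ≥ 3 be an integer and consider the (2j+1)-st order dispersive equation ∂_t u + γ₀∂_x^{2j+1}u + γ₁∂_x^{2j−1}u + ⋯ + γ_{j−1}∂_x³u + γ_j∂_x u = N(∂_x³u,∂_x²u,∂_xu,u) on the torus, where γ₀,…,γ_j ∈ ℝ and γ₀ ≠ 0. Let φ ∈ H^{13}(𝕋) be real-valued with φ ∉ C^∞(𝕋) and P_N(φ) < 0. Then for every T > 0 there does not exist any real-valued solution u ∈ C([0,T]; H^{13}(𝕋)) (solving the equation in the sense of distributions) on [0,T]×𝕋 with u(0,·) = φ. -/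
/- (2j+1)-st order dispersive equations on the torus: non-existence of H^{13} solutions
   forward in time when P_N(φ) < 0 and φ is not smooth. -/

namespace FifthOrderStmt5

/-- Fourier coefficient of a `2π`-periodic function `f : ℝ → ℝ`:
`f̂(k) = (1/2π) ∫_0^{2π} f(x) e^{-ikx} dx`. -/
noncomputable def fc (f : ℝ → ℝ) (k : ℤ) : ℂ :=
  (Complex.ofReal (2 * Real.pi))⁻¹ *
    ∫ x in (0:ℝ)..(2 * Real.pi), (f x : ℂ) * Complex.exp (-Complex.I * (k : ℂ) * (x : ℂ))

/-- Sobolev norm `‖f‖_{H^s} = (Σ_k (1+k²)^s |f̂(k)|²)^{1/2}`. -/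
noncomputable def hsNorm (s : ℕ) (f : ℝ → ℝ) : ℝ :=
  Real.sqrt (∑' k : ℤ, (1 + (k : ℝ) ^ 2) ^ s * ‖fc f k‖ ^ 2)

/-- `f` belongs to `H^s(𝕋)` (continuous representative, `2π`-periodic, finite `H^s` norm). -/
def MemHs (s : ℕ) (f : ℝ → ℝ) : Prop :=
  Continuous f ∧ Function.Periodic f (2 * Real.pi) ∧
    Summable (fun k : ℤ => (1 + (k : ℝ) ^ 2) ^ s * ‖fc f k‖ ^ 2)

/-- The nonlinearity `N(∂_x³f, ∂_x²f, ∂_xf, f) = Σ_j λ_j (∂_x³f)^{a_j}(∂_x²f)^{b_j}(∂_xf)^{c_j}f^{d_j}`. -/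
noncomputable def Nfun (j0 : ℕ) (lam : Fin j0 → ℝ) (a b c d : Fin j0 → ℕ)
    (f : ℝ → ℝ) (x : ℝ) : ℝ :=
  ∑ j : Fin j0, lam j * (iteratedDeriv 3 f x) ^ (a j) * (iteratedDeriv 2 f x) ^ (b j) *
    (deriv f x) ^ (c j) * (f x) ^ (d j)

/-- The functional `P_N(f) = Σ_j (λ_j b_j / 2π) ∫_𝕋 (∂_x³f)^{a_j}(∂_x²f)^{b_j-1}(∂_xf)^{c_j}f^{d_j} dx`. -/
noncomputable def PN (j0 : ℕ) (lam : Fin j0 → ℝ) (a b c d : Fin j0 → ℕ) (f : ℝ → ℝ) : ℝ :=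
  ∑ j : Fin j0, (lam j * (b j : ℝ) / (2 * Real.pi)) *
    ∫ x in (0:ℝ)..(2 * Real.pi),
      (iteratedDeriv 3 f x) ^ (a j) * (iteratedDeriv 2 f x) ^ (b j - 1) *
        (deriv f x) ^ (c j) * (f x) ^ (d j)

/-- `u` is a (distributional) solution of the `(2j+1)`-st order dispersive equation
`∂_t u + γ₀∂_x^{2j+1}u + γ₁∂_x^{2j-1}u + ⋯ + γ_{j-1}∂_x³u + γ_j∂_x u = N(∂_x³u,∂_x²u,∂_xu,u)`
on `[T₁,T₂] × 𝕋` (all spatial derivatives in the linear part have odd order, so integration by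
parts puts a `+` sign on each term applied to the test function). -/
def IsSolutionH (jj : ℕ) (γ : ℕ → ℝ) (j0 : ℕ) (lam : Fin j0 → ℝ) (a b c d : Fin j0 → ℕ)
    (T1 T2 : ℝ) (u : ℝ → ℝ → ℝ) : Prop :=
  (∀ t ∈ Set.Icc T1 T2, ContDiff ℝ 3 (u t) ∧ Function.Periodic (u t) (2 * Real.pi)) ∧
  ∀ ψ : ℝ → ℝ → ℝ, ContDiff ℝ (⊤ : ℕ∞) (Function.uncurry ψ) →
    (∀ t : ℝ, Function.Periodic (ψ t) (2 * Real.pi)) →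
    (∀ t : ℝ, t ∉ Set.Ioo T1 T2 → ∀ x : ℝ, ψ t x = 0) →
    (∫ t in T1..T2, ∫ x in (0:ℝ)..(2 * Real.pi),
      (u t x * (deriv (fun τ : ℝ => ψ τ x) t
        + ∑ i ∈ Finset.range (jj + 1), γ i * iteratedDeriv (2 * (jj - i) + 1) (ψ t) x)
      + Nfun j0 lam a b c d (u t) x * ψ t x)) = 0

/-- `t ↦ u(t)` is continuous from `A` into `H^s(𝕋)`. -/
def ContInHs (s : ℕ) (A : Set ℝ) (u : ℝ → ℝ → ℝ) : Prop :=
  ∀ t₀ ∈ A, ∀ ε > 0, ∃ δ > 0, ∀ t ∈ A, |t - t₀| < δ →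
    hsNorm s (fun x => u t x - u t₀ x) < ε

instance fact_two_pi_pos : Fact (0 < 2 * Real.pi) := ⟨Real.two_pi_pos⟩

/-- Continuous complex-valued functions on the circle of circumference `2π`. -/
abbrev CircleFun := C(AddCircle (2 * Real.pi), ℂ)

theorem integrable_fourier_smul (f : CircleFun) (k : ℤ) :
    MeasureTheory.Integrable (fun x => fourier (-k) x • f x)
      (AddCircle.haarAddCircle (T := 2 * Real.pi)) := by
  have h : Continuous fun x => fourier (-k) x • f x := by fun_prop
  exact h.integrable_of_hasCompactSupport (HasCompactSupport.of_compactSpace _)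

/-- The `k`-th Fourier coefficient as a continuous linear functional. -/
noncomputable def coef (k : ℤ) : CircleFun →L[ℂ] ℂ :=
  LinearMap.mkContinuous
    { toFun := fun f => fourierCoeff f k
      map_add' := fun f g => by
        simp only [fourierCoeff, ContinuousMap.add_apply, smul_add]
        exact MeasureTheory.integral_add (integrable_fourier_smul f k) (integrable_fourier_smul g k)
      map_smul' := fun c f => by
        simpa using fourierCoeff.const_smul (fun x => f x) c k } 1
    (fun f => by
      simp only [LinearMap.coe_mk, AddHom.coe_mk, one_mul, fourierCoeff]
      refine (MeasureTheory.norm_integral_le_of_norm_le_const (C := ‖f‖)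
        (Filter.Eventually.of_forall fun x => ?_)).trans (by simp)
      rw [norm_smul]
      have : ‖fourier (-k) x‖ = 1 := by rw [fourier_apply]; exact Circle.norm_coe _
      rw [this, one_mul]
      exact f.norm_coe_le_norm x)

theorem coef_apply (k : ℤ) (f : CircleFun) : coef k f = fourierCoeff f k := rfl

theorem coef_fourier (k m : ℤ) :
    coef k (fourier m : CircleFun) = if k = m then 1 else 0 := by
  rw [coef_apply, fourierCoeff_fourier, Pi.single_apply]

theorem coef_fourier_mul (k m : ℤ) (g : CircleFun) :
    coef k (fourier m * g) = coef (k - m) g := by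
  simp only [coef_apply, fourierCoeff, ContinuousMap.mul_apply, smul_eq_mul]
  refine MeasureTheory.integral_congr_ae (Filter.Eventually.of_forall fun x => ?_)
  simp only
  rw [← mul_assoc, ← fourier_add]
  congr 3
  ring

theorem coef_star (k : ℤ) (f : CircleFun) : coef k (star f) = starRingEnd ℂ (coef (-k) f) := by
  simp only [coef_apply, fourierCoeff, neg_neg, smul_eq_mul, ← integral_conj, map_mul,
    ← fourier_neg, ContinuousMap.star_apply]
  rfl

theorem hasSum_coef {f : CircleFun} (hf : Summable fun m => ‖coef m f‖) :
    HasSum (fun m => coef m f • (fourier m : CircleFun)) f :=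
  hasSum_fourier_series_of_summable hf.of_norm

theorem hasSum_coef_mul {f : CircleFun} (hf : Summable fun m => ‖coef m f‖) (g : CircleFun)
    (k : ℤ) : HasSum (fun m => coef m f * coef (k - m) g) (coef k (f * g)) := by
  have h := ((hasSum_coef hf).mul_right g).mapL (coef k)
  simpa [smul_mul_assoc, coef_fourier_mul] using h

theorem norm_le_tsum_coef {f : CircleFun} (hf : Summable fun m => ‖coef m f‖) :
    ‖f‖ ≤ ∑' m, ‖coef m f‖ := by
  rw [← (hasSum_coef hf).tsum_eq]
  have h (m : ℤ) : ‖coef m f • (fourier m : CircleFun)‖ = ‖coef m f‖ := by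
    rw [norm_smul, fourier_norm, mul_one]
  have h2 := norm_tsum_le_tsum_norm (f := fun m => coef m f • (fourier m : CircleFun))
    (by simpa only [h] using hf)
  simpa only [h, (hasSum_coef hf).tsum_eq] using h2

theorem summable_conv {a b : ℤ → ℝ} (ha : Summable a) (hb : Summable b) (ha0 : ∀ m, 0 ≤ a m)
    (hb0 : ∀ m, 0 ≤ b m) :
    HasSum (fun k => ∑' m, a m * b (k - m)) ((∑' m, a m) * ∑' m, b m) := by
  have h1 : Summable fun p : ℤ × ℤ => a p.1 * b p.2 := ha.mul_of_nonneg hb ha0 hb0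
  have h2 : HasSum (fun p : ℤ × ℤ => a p.1 * b p.2) ((∑' m, a m) * ∑' m, b m) := by
    rw [ha.tsum_mul_tsum hb h1]
    exact h1.hasSum
  let e : ℤ × ℤ ≃ ℤ × ℤ :=
    { toFun := fun p => (p.2, p.1 - p.2)
      invFun := fun p => (p.1 + p.2, p.1)
      left_inv := fun p => by ext <;> simp
      right_inv := fun p => by ext <;> simp }
  have h3 : HasSum (fun p : ℤ × ℤ => a p.2 * b (p.1 - p.2)) ((∑' m, a m) * ∑' m, b m) :=
    e.hasSum_iff.mpr h2
  exact h3.prod_fiberwise fun k => (h3.summable.prod_factor k).hasSum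

theorem weighted_mul_le {r : ℕ} {A B x y z F G : ℝ} (hx : 0 ≤ x) (hF : 0 ≤ F) (hG : 0 ≤ G) (hA : 0 ≤ A) (hB : 0 ≤ B) (hk : x ≤ y + z)
    (h1 : (1 + y) ^ r * F ≤ A) (h2 : (1 + z) ^ r * G ≤ B) :
    (1 + x) ^ r * (F * G) ≤ 2 ^ r * (A * G + B * F) := by
  rcases le_total y z with hm | hm
  · have : (1 + x) ^ r ≤ 2 ^ r * (1 + z) ^ r := by
      rw [← mul_pow]; gcongr; linarith
    calc _ ≤ 2 ^ r * (1 + z) ^ r * (F * G) := by gcongr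
      _ = 2 ^ r * (((1 + z) ^ r * G) * F) := by ring
      _ ≤ 2 ^ r * (B * F) := by gcongr
      _ ≤ _ := by gcongr; exact le_add_of_nonneg_left (by positivity)
  · have : (1 + x) ^ r ≤ 2 ^ r * (1 + y) ^ r := by
      rw [← mul_pow]; gcongr; linarith
    calc _ ≤ 2 ^ r * (1 + y) ^ r * (F * G) := by gcongr
      _ = 2 ^ r * (((1 + y) ^ r * F) * G) := by ring
      _ ≤ 2 ^ r * (A * G) := by gcongr
      _ ≤ _ := by gcongr; exact le_add_of_nonneg_right (by positivity)

/-- `f` has absolutely summable Fourier coefficients, with sum at most `α`, and its `k`-th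
coefficient is at most `A (1 + |k|) ^ (-r)`. -/
structure Tame (r : ℕ) (A α : ℝ) (f : CircleFun) : Prop where
  summable : Summable fun m => ‖coef m f‖
  tsum_le : ∑' m, ‖coef m f‖ ≤ α
  bound : ∀ k : ℤ, (1 + |(k : ℝ)|) ^ r * ‖coef k f‖ ≤ A

namespace Tame

variable {r : ℕ} {A B α β : ℝ} {f g : CircleFun}

theorem nonneg_left (hf : Tame r A α f) : 0 ≤ A :=
  le_trans (by positivity) (hf.bound 0)

theorem nonneg_right (hf : Tame r A α f) : 0 ≤ α :=
  le_trans (tsum_nonneg fun _ => norm_nonneg _) hf.tsum_le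

theorem mono (hf : Tame r A α f) (h1 : A ≤ B) (h2 : α ≤ β) : Tame r B β f :=
  ⟨hf.summable, hf.tsum_le.trans h2, fun k => (hf.bound k).trans h1⟩

theorem of_norm_coef_le (hf : Tame r A α f) (h : ∀ k, ‖coef k g‖ ≤ ‖coef k f‖) :
    Tame r A α g := by
  have hs := Summable.of_nonneg_of_le (fun _ => norm_nonneg _) h hf.summable
  exact ⟨hs, (hs.tsum_le_tsum h hf.summable).trans hf.tsum_le,
    fun k => (mul_le_mul_of_nonneg_left (h k) (by positivity)).trans (hf.bound k)⟩

theorem add (hf : Tame r A α f) (hg : Tame r B β g) : Tame r (A + B) (α + β) (f + g) := by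
  have h : ∀ k, ‖coef k (f + g)‖ ≤ ‖coef k f‖ + ‖coef k g‖ := fun k => by
    rw [map_add]; exact norm_add_le _ _
  have hs := Summable.of_nonneg_of_le (fun _ => norm_nonneg _) h (hf.summable.add hg.summable)
  refine ⟨hs, ?_, fun k => ?_⟩
  · refine (hs.tsum_le_tsum h (hf.summable.add hg.summable)).trans ?_
    rw [hf.summable.tsum_add hg.summable]
    exact add_le_add hf.tsum_le hg.tsum_le
  · refine (mul_le_mul_of_nonneg_left (h k) (by positivity)).trans ?_
    rw [mul_add]
    exact add_le_add (hf.bound k) (hg.bound k)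

theorem weight_mul_le (hf : Tame r A α f) (hg : Tame r B β g) (k m : ℤ) :
    (1 + |(k : ℝ)|) ^ r * (‖coef m f‖ * ‖coef (k - m) g‖) ≤
      2 ^ r * (A * ‖coef (k - m) g‖ + B * ‖coef m f‖) := by
  refine weighted_mul_le (y := |(m : ℝ)|) (z := |((k - m : ℤ) : ℝ)|) (abs_nonneg _) (norm_nonneg _)
    (norm_nonneg _) hf.nonneg_left hg.nonneg_left ?_ (hf.bound m) (hg.bound (k - m))
  have := abs_add_le (m : ℝ) ((k - m : ℤ) : ℝ)
  push_cast at this ⊢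
  simpa using this

theorem mul (hf : Tame r A α f) (hg : Tame r B β g) :
    Tame r (2 ^ r * (A * β + B * α)) (α * β) (f * g) := by
  have hc := summable_conv hf.summable hg.summable (fun _ => norm_nonneg _) fun _ => norm_nonneg _
  have hg' (k : ℤ) : Summable fun m => ‖coef (k - m) g‖ :=
    (Equiv.subLeft k).summable_iff.mpr hg.summable
  have hgb (m : ℤ) : ‖coef m g‖ ≤ β :=
    (hg.summable.le_tsum m fun _ _ => norm_nonneg _).trans hg.tsum_le
  have hs (k : ℤ) : Summable fun m => ‖coef m f‖ * ‖coef (k - m) g‖ :=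
    Summable.of_nonneg_of_le (fun _ => by positivity)
      (fun m => mul_le_mul_of_nonneg_left (hgb _) (norm_nonneg _)) (hf.summable.mul_right β)
  have h (k : ℤ) : ‖coef k (f * g)‖ ≤ ∑' m, ‖coef m f‖ * ‖coef (k - m) g‖ := by
    rw [← (hasSum_coef_mul hf.summable g k).tsum_eq]
    have h1 := norm_tsum_le_tsum_norm (f := fun m => coef m f * coef (k - m) g)
      (by simpa only [norm_mul] using hs k)
    simpa only [norm_mul] using h1
  have hsum := Summable.of_nonneg_of_le (fun _ => norm_nonneg _) h hc.summable
  refine ⟨hsum, ?_, fun k => ?_⟩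
  · refine (hsum.tsum_le_tsum h hc.summable).trans ?_
    rw [hc.tsum_eq]
    exact mul_le_mul hf.tsum_le hg.tsum_le (tsum_nonneg fun _ => norm_nonneg _) hf.nonneg_right
  · have key (m : ℤ) := hf.weight_mul_le hg k m
    have hr : Summable fun m => 2 ^ r * (A * ‖coef (k - m) g‖ + B * ‖coef m f‖) :=
      (((hg' k).mul_left A).add (hf.summable.mul_left B)).mul_left _
    calc _ ≤ (1 + |(k : ℝ)|) ^ r * ∑' m, ‖coef m f‖ * ‖coef (k - m) g‖ := by
            gcongr; exact h k
      _ = ∑' m, (1 + |(k : ℝ)|) ^ r * (‖coef m f‖ * ‖coef (k - m) g‖) := tsum_mul_left.symm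
      _ ≤ ∑' m, 2 ^ r * (A * ‖coef (k - m) g‖ + B * ‖coef m f‖) :=
            ((hs k).mul_left _).tsum_le_tsum key hr
      _ = 2 ^ r * (A * (∑' m, ‖coef m g‖) + B * ∑' m, ‖coef m f‖) := by
            rw [tsum_mul_left, ((hg' k).mul_left A).tsum_add (hf.summable.mul_left B),
              tsum_mul_left, tsum_mul_left]
            congr 3
            exact (Equiv.subLeft k).tsum_eq fun m => ‖coef m g‖
      _ ≤ _ := by
            have := hf.nonneg_left
            have := hg.nonneg_left
            gcongr
            · exact hg.tsum_le
            · exact hf.tsum_le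

theorem of_algebraMap (c : ℝ) : Tame r |c| |c| (algebraMap ℝ CircleFun c) := by
  have h (k : ℤ) : ‖coef k (algebraMap ℝ CircleFun c)‖ = if k = 0 then |c| else 0 := by
    have : algebraMap ℝ CircleFun c = (c : ℂ) • (fourier 0 : CircleFun) := by
      ext x; simp
    rw [this, map_smul, coef_fourier]
    split_ifs <;> simp
  have hs : HasSum (fun k : ℤ => ‖coef k (algebraMap ℝ CircleFun c)‖) |c| := by
    simpa only [h] using hasSum_ite_eq (0 : ℤ) |c|
  refine ⟨hs.summable, hs.tsum_eq.le, fun k => ?_⟩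
  rw [h]
  split_ifs with hk
  · simp [hk]
  · simp

theorem exists_aeval {ι : Type*} (P : MvPolynomial ι ℝ) (r : ℕ) (A α : ℝ) :
    ∃ A' α', 0 ≤ A' ∧ 0 ≤ α' ∧ ∀ v : ι → CircleFun, (∀ i, Tame r A α (v i)) →
      Tame r A' α' (MvPolynomial.aeval v P) := by
  induction P using MvPolynomial.induction_on with
  | C c =>
    refine ⟨|c|, |c|, abs_nonneg c, abs_nonneg c, fun v _ => ?_⟩
    rw [MvPolynomial.aeval_C]
    exact of_algebraMap c
  | add p q hp hq =>
    obtain ⟨A₁, α₁, hA₁, hα₁, h₁⟩ := hp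
    obtain ⟨A₂, α₂, hA₂, hα₂, h₂⟩ := hq
    exact ⟨A₁ + A₂, α₁ + α₂, by positivity, by positivity, fun v hv => by
      rw [map_add]; exact (h₁ v hv).add (h₂ v hv)⟩
  | mul_X p i hp =>
    obtain ⟨A₁, α₁, hA₁, hα₁, h₁⟩ := hp
    refine ⟨|2 ^ r * (A₁ * α + A * α₁)|, |α₁ * α|, abs_nonneg _, abs_nonneg _, fun v hv => ?_⟩
    rw [map_mul, MvPolynomial.aeval_X]
    exact ((h₁ v hv).mul (hv i)).mono (le_abs_self _) (le_abs_self _)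

end Tame

open MvPolynomial in
theorem aeval_pderiv_mul_X_mul {ι R : Type} [DecidableEq ι] [CommRing R] [Algebra ℝ R]
    (p : MvPolynomial ι ℝ) (i l : ι) (a b : ι → R) :
    aeval a (pderiv l (p * X i)) * b l =
      aeval a (pderiv l p) * b l * a i + if l = i then aeval a p * b i else 0 := by
  rw [Derivation.leibniz, pderiv_X]
  by_cases hl : l = i
  · subst hl
    simp
    ring
  · simp [hl]
    ring

open MvPolynomial in
theorem exists_taylor_two {ι : Type} [Fintype ι] [DecidableEq ι] (P : MvPolynomial ι ℝ) :
    ∃ Q : ι → ι → MvPolynomial (ι ⊕ ι) ℝ, ∀ (R : Type) [CommRing R] [Algebra ℝ R] (a b : ι → R),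
      aeval (a + b) P = aeval a P + ∑ l, aeval a (pderiv l P) * b l +
        ∑ l, ∑ l', b l * b l' * aeval (Sum.elim a b) (Q l l') := by
  induction P using MvPolynomial.induction_on with
  | C c => exact ⟨0, fun R _ _ a b => by simp⟩
  | add p q hp hq =>
    obtain ⟨Q₁, h₁⟩ := hp
    obtain ⟨Q₂, h₂⟩ := hq
    refine ⟨Q₁ + Q₂, fun R _ _ a b => ?_⟩
    simp only [map_add, h₁, h₂, Pi.add_apply, add_mul, mul_add, Finset.sum_add_distrib]
    ring
  | mul_X p i hp =>
    obtain ⟨Q, h⟩ := hp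
    refine ⟨fun l l' => (if l' = i then rename Sum.inl (pderiv l p) else 0) +
      Q l l' * (X (Sum.inl i) + X (Sum.inr i)), fun R _ _ a b => ?_⟩
    have e1 (l : ι) := aeval_pderiv_mul_X_mul p i l a b
    have e2 (l l' : ι) : b l * b l' * aeval (Sum.elim a b)
        ((if l' = i then rename Sum.inl (pderiv l p) else 0) +
          Q l l' * (X (Sum.inl i) + X (Sum.inr i))) =
        (if l' = i then aeval a (pderiv l p) * b l * b i else 0) +
          b l * b l' * aeval (Sum.elim a b) (Q l l') * (a i + b i) := by
      by_cases hl : l' = i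
      · subst hl
        simp only [if_true, map_add, map_mul, aeval_rename, aeval_X, Sum.elim_comp_inl,
          Sum.elim_inl, Sum.elim_inr]
        ring
      · simp only [hl, if_false, map_add, map_mul, aeval_X, Sum.elim_inl, Sum.elim_inr, map_zero]
        ring
    simp only [e1, e2, Finset.sum_add_distrib, Finset.sum_ite_eq', Finset.mem_univ, if_true,
      ← Finset.sum_mul, map_mul, aeval_X, h R a b, Pi.add_apply]
    ring

open MvPolynomial in
theorem hasDerivAt_aeval {ι : Type} [Fintype ι] [DecidableEq ι] (P : MvPolynomial ι ℝ)
    {v : ℝ → ι → CircleFun} {v' : ι → CircleFun} {t : ℝ}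
    (hv : ∀ l, HasDerivAt (fun τ => v τ l) (v' l) t) :
    HasDerivAt (fun τ => aeval (v τ) P) (∑ l, aeval (v t) (pderiv l P) * v' l) t := by
  induction P using MvPolynomial.induction_on with
  | C c => simpa using hasDerivAt_const t (algebraMap ℝ CircleFun c)
  | add p q hp hq =>
    simp only [map_add, add_mul, Finset.sum_add_distrib]
    exact hp.add hq
  | mul_X p i hp =>
    have e1 (l : ι) := aeval_pderiv_mul_X_mul p i l (v t) v'
    simp only [e1, Finset.sum_add_distrib, Finset.sum_ite_eq', Finset.mem_univ, if_true,
      ← Finset.sum_mul, map_mul, aeval_X]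
    exact hp.mul (hv i)

theorem star_aeval {ι : Type} (P : MvPolynomial ι ℝ) {v : ι → CircleFun}
    (hv : ∀ l, star (v l) = v l) :
    star (MvPolynomial.aeval v P) = MvPolynomial.aeval v P := by
  induction P using MvPolynomial.induction_on with
  | C c =>
    ext x
    simp
  | add p q hp hq => rw [map_add, star_add, hp, hq]
  | mul_X p i hp => rw [map_mul, star_mul, MvPolynomial.aeval_X, hp, hv, mul_comm]

theorem coef_zero_im {f : CircleFun} (hf : star f = f) : (coef 0 f).im = 0 := by
  have h := coef_star 0 f
  rw [hf, neg_zero] at h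
  exact Complex.conj_eq_iff_im.mp h.symm

theorem continuous_aeval {ι : Type} (P : MvPolynomial ι ℝ) :
    Continuous fun v : ι → CircleFun => MvPolynomial.aeval v P := by
  induction P using MvPolynomial.induction_on with
  | C c => simpa using continuous_const
  | add p q hp hq => simp only [map_add]; exact hp.add hq
  | mul_X p i hp =>
    simp only [map_mul, MvPolynomial.aeval_X]
    exact hp.mul (continuous_apply i)

/-- The Fourier coefficients of `f` vanish at frequencies above `D`. -/
def BandLimited (D : ℕ) (f : CircleFun) : Prop := ∀ m : ℤ, (D : ℤ) < |m| → coef m f = 0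

namespace BandLimited

variable {D D' : ℕ} {f g : CircleFun}

theorem mono (hf : BandLimited D f) (h : D ≤ D') : BandLimited D' f :=
  fun m hm => hf m (lt_of_le_of_lt (by exact_mod_cast h) hm)

theorem add (hf : BandLimited D f) (hg : BandLimited D g) : BandLimited D (f + g) :=
  fun m hm => by rw [map_add, hf m hm, hg m hm, add_zero]

theorem eq_zero_of_notMem (hf : BandLimited D f) {m : ℤ} (hm : m ∉ Finset.Icc (-(D : ℤ)) D) :
    coef m f = 0 := by
  refine hf m (not_le.mp fun h => hm ?_)
  rw [Finset.mem_Icc]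
  exact abs_le.mp h

theorem coef_mul (hf : BandLimited D f) (g : CircleFun) (k : ℤ) :
    coef k (f * g) = ∑ m ∈ Finset.Icc (-(D : ℤ)) D, coef m f * coef (k - m) g := by
  have hs : Summable fun m => ‖coef m f‖ :=
    summable_of_ne_finset_zero (s := Finset.Icc (-(D : ℤ)) D) fun m hm => by
      rw [hf.eq_zero_of_notMem hm, norm_zero]
  rw [← (hasSum_coef_mul hs g k).tsum_eq]
  exact tsum_eq_sum fun m hm => by rw [hf.eq_zero_of_notMem hm, zero_mul]

theorem mul (hf : BandLimited D f) (hg : BandLimited D' g) : BandLimited (D + D') (f * g) := by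
  intro k hk
  rw [hf.coef_mul]
  refine Finset.sum_eq_zero fun m hm => ?_
  rw [hg (k - m), mul_zero]
  have h1 := abs_le.mpr (Finset.mem_Icc.mp hm)
  have h2 := abs_add_le m (k - m)
  rw [add_sub_cancel] at h2
  push_cast at hk
  linarith

theorem exists_aeval {ι : Type*} (P : MvPolynomial ι ℝ) :
    ∃ D, ∀ (M : ℕ) (v : ι → CircleFun), (∀ i, BandLimited M (v i)) →
      BandLimited (D * M) (MvPolynomial.aeval v P) := by
  induction P using MvPolynomial.induction_on with
  | C c =>
    refine ⟨0, fun M v _ m hm => ?_⟩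
    have : algebraMap ℝ CircleFun c = (c : ℂ) • (fourier 0 : CircleFun) := by
      ext x; simp
    rw [MvPolynomial.aeval_C, this, map_smul, coef_fourier, if_neg, smul_zero]
    rintro rfl
    simp at hm
  | add p q hp hq =>
    obtain ⟨D₁, h₁⟩ := hp
    obtain ⟨D₂, h₂⟩ := hq
    refine ⟨D₁ + D₂, fun M v hv => ?_⟩
    rw [map_add, add_mul]
    exact ((h₁ M v hv).mono (Nat.le_add_right _ _)).add ((h₂ M v hv).mono (Nat.le_add_left _ _))
  | mul_X p i hp =>
    obtain ⟨D, h⟩ := hp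
    refine ⟨D + 1, fun M v hv => ?_⟩
    rw [map_mul, MvPolynomial.aeval_X, add_mul, one_mul]
    exact (h M v hv).mul (hv i)

end BandLimited

theorem summable_inv_sq_weight : Summable fun k : ℤ => ((1 + |(k : ℝ)|) ^ 2)⁻¹ := by
  refine Summable.of_norm_bounded_eventually
    (g := fun k : ℤ => |(k : ℝ)| ^ (-2 : ℝ)) (Real.summable_abs_int_rpow (by norm_num)) ?_
  filter_upwards [(Set.finite_singleton (0 : ℤ)).compl_mem_cofinite] with k hk
  have hk0 : 0 < |(k : ℝ)| := by
    rw [abs_pos]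
    exact_mod_cast hk
  rw [Real.norm_of_nonneg (by positivity), Real.rpow_neg hk0.le, Real.rpow_two]
  gcongr
  linarith

/-- The sum of the weights `(1 + |k|) ^ (-2)`. -/
noncomputable def weightSum : ℝ := ∑' k : ℤ, ((1 + |(k : ℝ)|) ^ 2)⁻¹

theorem weightSum_nonneg : 0 ≤ weightSum := tsum_nonneg fun _ => by positivity

theorem Tame.of_bound_sq {r : ℕ} {A B : ℝ} {f : CircleFun}
    (h : ∀ k : ℤ, (1 + |(k : ℝ)|) ^ r * ‖coef k f‖ ≤ A)
    (h2 : ∀ k : ℤ, (1 + |(k : ℝ)|) ^ 2 * ‖coef k f‖ ≤ B) : Tame r A (B * weightSum) f := by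
  have hb (k : ℤ) : ‖coef k f‖ ≤ B * ((1 + |(k : ℝ)|) ^ 2)⁻¹ := by
    rw [← div_eq_mul_inv, le_div_iff₀ (by positivity), mul_comm]
    exact h2 k
  have hs := summable_inv_sq_weight.mul_left B
  have hs' := Summable.of_nonneg_of_le (fun _ => norm_nonneg _) hb hs
  refine ⟨hs', ?_, h⟩
  rw [weightSum, ← tsum_mul_left]
  exact hs'.tsum_le_tsum hb hs

theorem Tame.of_bound {r : ℕ} (hr : 2 ≤ r) {A : ℝ} {f : CircleFun}
    (h : ∀ k : ℤ, (1 + |(k : ℝ)|) ^ r * ‖coef k f‖ ≤ A) : Tame r A (A * weightSum) f :=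
  Tame.of_bound_sq h fun k => (mul_le_mul_of_nonneg_right
    (pow_le_pow_right₀ (by linarith [abs_nonneg (k : ℝ)]) hr) (norm_nonneg _)).trans (h k)

/-- Sharp truncation to frequencies at most `M`. -/
noncomputable def cut (M : ℕ) (f : CircleFun) : CircleFun :=
  ∑ m ∈ Finset.Icc (-(M : ℤ)) M, coef m f • (fourier m : CircleFun)

theorem coef_cut (M : ℕ) (f : CircleFun) (k : ℤ) :
    coef k (cut M f) = if |k| ≤ M then coef k f else 0 := by
  simp only [cut, map_sum, map_smul, coef_fourier, smul_eq_mul, mul_ite, mul_one, mul_zero,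
    Finset.sum_ite_eq, Finset.mem_Icc, abs_le]

theorem bandLimited_cut (M : ℕ) (f : CircleFun) : BandLimited M (cut M f) := fun m hm => by
  rw [coef_cut, if_neg (not_le.mpr hm)]

theorem star_cut (M : ℕ) {f : CircleFun} (hf : star f = f) : star (cut M f) = cut M f := by
  have h (m : ℤ) : star (coef m f • (fourier m : CircleFun)) =
      coef (-m) f • (fourier (-m) : CircleFun) := by
    have h1 := coef_star (-m) f
    rw [hf, neg_neg] at h1
    rw [h1]
    ext x
    simp [-fourier_apply, fourier_neg]
  rw [cut, star_sum]
  simp only [h]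
  refine Finset.sum_nbij' (fun m => -m) (fun m => -m) ?_ ?_ ?_ ?_ ?_ <;>
    simp [Finset.mem_Icc] <;> grind

theorem norm_coef_cut_le (M : ℕ) (f : CircleFun) (k : ℤ) : ‖coef k (cut M f)‖ ≤ ‖coef k f‖ := by
  rw [coef_cut]
  split_ifs <;> simp

theorem coef_sub_cut (M : ℕ) (f : CircleFun) (k : ℤ) :
    coef k (f - cut M f) = if |k| ≤ M then 0 else coef k f := by
  rw [map_sub, coef_cut]
  split_ifs <;> simp

theorem norm_coef_sub_cut_le (M : ℕ) (f : CircleFun) (k : ℤ) :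
    ‖coef k (f - cut M f)‖ ≤ ‖coef k f‖ := by
  rw [coef_sub_cut]
  split_ifs <;> simp

theorem tame_sub_cut {r : ℕ} (hr : 6 ≤ r) {A : ℝ} {f : CircleFun}
    (h : ∀ k : ℤ, (1 + |(k : ℝ)|) ^ r * ‖coef k f‖ ≤ A) (M : ℕ) :
    Tame r A (A / (1 + M) ^ 4 * weightSum) (f - cut M f) := by
  refine Tame.of_bound_sq (fun k => (mul_le_mul_of_nonneg_left (norm_coef_sub_cut_le M f k)
    (by positivity)).trans (h k)) fun k => ?_
  have hA : 0 ≤ A := le_trans (by positivity) (h 0)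
  rw [coef_sub_cut]
  split_ifs with hk
  · rw [norm_zero, mul_zero]; positivity
  · have hk' : (M : ℝ) ≤ |(k : ℝ)| := by exact_mod_cast (not_le.mp hk).le
    rw [le_div_iff₀ (by positivity)]
    calc _ ≤ (1 + |(k : ℝ)|) ^ 2 * ‖coef k f‖ * (1 + |(k : ℝ)|) ^ 4 := by gcongr
      _ = (1 + |(k : ℝ)|) ^ 6 * ‖coef k f‖ := by ring
      _ ≤ (1 + |(k : ℝ)|) ^ r * ‖coef k f‖ := by
          gcongr
          linarith [abs_nonneg (k : ℝ)]
      _ ≤ A := h k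

open MvPolynomial in
/-- Paralinearization: high frequencies of `P(f)` are, up to a small error, the product of the
low frequencies of the first derivatives of `P` at `f` with the high frequencies of `f`. -/
theorem exists_paralinearization (P : MvPolynomial (Fin 4) ℝ) {r : ℕ} (hr : 6 ≤ r) (A : ℝ) :
    ∃ (D : ℕ) (C : ℝ), 0 ≤ C ∧ ∀ f : Fin 4 → CircleFun,
      (∀ l, ∀ k : ℤ, (1 + |(k : ℝ)|) ^ r * ‖coef k (f l)‖ ≤ A) → ∀ (M : ℕ) (k : ℤ),
      ((D + 1) * M : ℤ) < |k| →
      (1 + |(k : ℝ)|) ^ r * ‖coef k (aeval f P) -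
        ∑ m ∈ Finset.Icc (-((D * M : ℕ) : ℤ)) (D * M : ℕ),
          ∑ l, coef m (aeval (fun i => cut M (f i)) (pderiv l P)) * coef (k - m) (f l)‖ ≤
      C / (1 + M) ^ 4 := by
  obtain ⟨Q, hQ⟩ := exists_taylor_two P
  obtain ⟨D₀, hD₀⟩ := BandLimited.exists_aeval P
  choose D₁ hD₁ using fun l => BandLimited.exists_aeval (pderiv l P)
  choose AQ αQ hAQ hαQ hTQ using fun l l' => Tame.exists_aeval (Q l l') r A (A * weightSum)
  have hS := weightSum_nonneg
  let B (l l' : Fin 4) : ℝ := 2 ^ r * (2 ^ r * (A * weightSum + A * weightSum) * αQ l l' +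
    AQ l l' * (weightSum * A * weightSum))
  refine ⟨D₀ + ∑ l, D₁ l, ∑ l, ∑ l', |A * B l l'|, by positivity, fun f hf M k hk => ?_⟩
  have hA : 0 ≤ A := le_trans (by positivity) (hf 0 0)
  set a : Fin 4 → CircleFun := fun i => cut M (f i) with ha
  set b : Fin 4 → CircleFun := fun i => f i - cut M (f i) with hb
  have hab : a + b = f := by ext1 i; simp [a, b]
  have hV (i : Fin 4) : Tame r A (A * weightSum) (f i) := Tame.of_bound (by omega) (hf i)
  have hta (i : Fin 4) : Tame r A (A * weightSum) (a i) :=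
    (hV i).of_norm_coef_le (norm_coef_cut_le M (f i))
  have htb (i : Fin 4) : Tame r A (A * weightSum) (b i) :=
    (hV i).of_norm_coef_le (norm_coef_sub_cut_le M (f i))
  have htb' (i : Fin 4) := tame_sub_cut hr (hf i) M
  have hM : (0 : ℝ) < (1 + M) ^ 4 := by positivity
  have hM1 : (1 : ℝ) ≤ (1 + M) ^ 4 := one_le_pow₀ (by linarith [M.cast_nonneg (α := ℝ)])
  have hDM : ((D₀ * M : ℕ) : ℤ) < |k| := by
    refine lt_of_le_of_lt ?_ hk
    norm_cast
    gcongr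
    omega
  have h0 : coef k (aeval a P) = 0 := hD₀ M a (fun i => bandLimited_cut M _) k hDM
  have hlin (l : Fin 4) : coef k (aeval a (pderiv l P) * b l) =
      ∑ m ∈ Finset.Icc (-(((D₀ + ∑ l, D₁ l) * M : ℕ) : ℤ)) ((D₀ + ∑ l, D₁ l) * M : ℕ),
        coef m (aeval a (pderiv l P)) * coef (k - m) (f l) := by
    have hband : BandLimited ((D₀ + ∑ l, D₁ l) * M) (aeval a (pderiv l P)) :=
      (hD₁ l M a fun i => bandLimited_cut M _).mono (Nat.mul_le_mul_right _
        ((Finset.single_le_sum (fun _ _ => Nat.zero_le _) (Finset.mem_univ l)).trans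
          (Nat.le_add_left _ _)))
    rw [hband.coef_mul]
    refine Finset.sum_congr rfl fun m hm => ?_
    congr 1
    rw [hb]
    dsimp only
    rw [coef_sub_cut, if_neg]
    rw [not_le]
    have h1 := abs_le.mpr (Finset.mem_Icc.mp hm)
    have h2 := abs_add_le m (k - m)
    rw [add_sub_cancel] at h2
    push_cast at h1 hk
    linarith
  have hexp : coef k (aeval f P) - ∑ m ∈ Finset.Icc (-(((D₀ + ∑ l, D₁ l) * M : ℕ) : ℤ))
      ((D₀ + ∑ l, D₁ l) * M : ℕ), ∑ l, coef m (aeval a (pderiv l P)) * coef (k - m) (f l) =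
      ∑ l, ∑ l', coef k (b l * b l' * aeval (Sum.elim a b) (Q l l')) := by
    rw [Finset.sum_comm]
    have h1 := congrArg (coef k) (hQ CircleFun a b)
    rw [hab] at h1
    rw [h1, map_add, map_add, h0, map_sum, map_sum]
    simp only [hlin, map_sum, zero_add, add_sub_cancel_left]
  rw [hexp]
  have hrem (l l' : Fin 4) : (1 + |(k : ℝ)|) ^ r *
      ‖coef k (b l * b l' * aeval (Sum.elim a b) (Q l l'))‖ ≤ |A * B l l'| / (1 + M) ^ 4 := by
    have hT := ((htb' l).mul (htb' l')).mul (hTQ l l' (Sum.elim a b) (by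
      rintro (i | i)
      · exact hta i
      · exact htb i))
    refine (hT.bound k).trans (le_trans ?_ (div_le_div_of_nonneg_right (le_abs_self _) hM.le))
    have h1 : A / (1 + M) ^ 4 ≤ A := div_le_self hA hM1
    have h2 := hAQ l l'
    have h3 := hαQ l l'
    calc _ = A / (1 + M) ^ 4 * (2 ^ r * (2 ^ r * (A * weightSum + A * weightSum) * αQ l l' +
            AQ l l' * (weightSum * (A / (1 + M) ^ 4) * weightSum))) := by ring
      _ ≤ A / (1 + M) ^ 4 * B l l' := by
            simp only [B]
            gcongr
      _ = _ := by ring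
  calc _ ≤ (1 + |(k : ℝ)|) ^ r *
        ∑ l, ∑ l', ‖coef k (b l * b l' * aeval (Sum.elim a b) (Q l l'))‖ := by
          gcongr
          exact (norm_sum_le _ _).trans (Finset.sum_le_sum fun l _ => norm_sum_le _ _)
    _ = ∑ l, ∑ l', (1 + |(k : ℝ)|) ^ r *
        ‖coef k (b l * b l' * aeval (Sum.elim a b) (Q l l'))‖ := by
          simp only [Finset.mul_sum]
    _ ≤ ∑ l, ∑ l', |A * B l l'| / (1 + M) ^ 4 := by
          gcongr with l _ l' _
          exact hrem l l'
    _ = _ := by simp only [Finset.sum_div]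

theorem hasDerivAt_normal_form {q : ℤ → ℝ} {w N : ℤ → ℝ → ℂ} {g : ℤ → ℝ → ℂ} {g' : ℤ → ℂ}
    {s : Finset ℤ} {k : ℤ} {t : ℝ} (κ : ℂ)
    (hw : ∀ n, HasDerivAt (w n) (-Complex.I * q n * w n t + N n t) t)
    (hg : ∀ m ∈ s, HasDerivAt (g m) (g' m) t) (hq : ∀ m ∈ s, q k - q (k - m) ≠ 0) :
    HasDerivAt (fun τ => w k τ + ∑ m ∈ s, Complex.I * g m τ / (q k - q (k - m) : ℝ) * w (k - m) τ)
      ((-Complex.I * q k + κ) *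
          (w k t + ∑ m ∈ s, Complex.I * g m t / (q k - q (k - m) : ℝ) * w (k - m) t) +
        ((N k t - κ * w k t - ∑ m ∈ s, g m t * w (k - m) t) -
          κ * (∑ m ∈ s, Complex.I * g m t / (q k - q (k - m) : ℝ) * w (k - m) t) +
          ∑ m ∈ s, Complex.I * g' m / (q k - q (k - m) : ℝ) * w (k - m) t +
          ∑ m ∈ s, Complex.I * g m t / (q k - q (k - m) : ℝ) * N (k - m) t)) t := by
  have h1 : HasDerivAt
      (fun τ => ∑ m ∈ s, Complex.I * g m τ / (q k - q (k - m) : ℝ) * w (k - m) τ)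
      (∑ m ∈ s, (Complex.I * g' m / (q k - q (k - m) : ℝ) * w (k - m) t +
        Complex.I * g m t / (q k - q (k - m) : ℝ) *
          (-Complex.I * q (k - m) * w (k - m) t + N (k - m) t))) t :=
    HasDerivAt.fun_sum fun m hm => (((hg m hm).const_mul _).div_const _).mul (hw (k - m))
  have h0 := (hw k).fun_add h1
  have h2 : ∑ m ∈ s, (Complex.I * g' m / (q k - q (k - m) : ℝ) * w (k - m) t +
        Complex.I * g m t / (q k - q (k - m) : ℝ) *
          (-Complex.I * q (k - m) * w (k - m) t + N (k - m) t)) =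
      -Complex.I * q k * (∑ m ∈ s, Complex.I * g m t / (q k - q (k - m) : ℝ) * w (k - m) t)
      - ∑ m ∈ s, g m t * w (k - m) t +
        ∑ m ∈ s, Complex.I * g' m / (q k - q (k - m) : ℝ) * w (k - m) t +
        ∑ m ∈ s, Complex.I * g m t / (q k - q (k - m) : ℝ) * N (k - m) t := by
    rw [Finset.mul_sum, ← Finset.sum_sub_distrib, ← Finset.sum_add_distrib,
      ← Finset.sum_add_distrib]
    refine Finset.sum_congr rfl fun m hm => ?_
    have h3 : ((q k - q (k - m) : ℝ) : ℂ) ≠ 0 := by exact_mod_cast hq m hm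
    have h4 : ((q (k - m) : ℝ) : ℂ) = q k - ((q k - q (k - m) : ℝ) : ℂ) := by push_cast; ring
    rw [h4]
    generalize ((q k - q (k - m) : ℝ) : ℂ) = Δ at *
    field_simp
    linear_combination (g m t * w (k - m) t * Δ) * Complex.I_sq
  rw [h2] at h0
  exact h0.congr_deriv (by ring)

/-- Backward Gronwall inequality for a linear equation with strongly growing coefficient. -/
theorem norm_sq_le_of_backward {h lam e : ℝ → ℂ} {T t σ E H : ℝ} (hσ : 0 < σ) (ht : t < T)
    (hc : ContinuousOn h (Set.Icc t T))
    (hd : ∀ τ ∈ Set.Ioo t T, HasDerivAt h (lam τ * h τ + e τ) τ)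
    (hlam : ∀ τ ∈ Set.Ioo t T, σ ≤ (lam τ).re) (he : ∀ τ ∈ Set.Ioo t T, ‖e τ‖ ≤ E)
    (hH : ‖h T‖ ≤ H) : ‖h t‖ ^ 2 ≤ H ^ 2 / (σ * (T - t)) + E ^ 2 / σ ^ 2 := by
  have hδ : 0 < T - t := sub_pos.mpr ht
  let y : ℝ → ℝ := fun τ => Real.exp (-(σ * τ)) * (‖h τ‖ ^ 2 - E ^ 2 / σ ^ 2)
  have hy : ∀ τ ∈ Set.Ioo t T, HasDerivAt y
      (Real.exp (-(σ * τ)) * -(σ * 1) * (‖h τ‖ ^ 2 - E ^ 2 / σ ^ 2) +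
        Real.exp (-(σ * τ)) * (2 * inner ℝ (h τ) (lam τ * h τ + e τ))) τ := fun τ hτ => by
    have h1 : HasDerivAt (fun τ => Real.exp (-(σ * τ))) (Real.exp (-(σ * τ)) * -(σ * 1)) τ :=
      ((hasDerivAt_id' τ).const_mul σ).neg.exp
    exact h1.mul ((hd τ hτ).norm_sq.sub_const _)
  have hmono : MonotoneOn y (Set.Icc t T) := by
    refine monotoneOn_of_deriv_nonneg (convex_Icc t T) ?_ ?_ ?_
    · exact ((by fun_prop : Continuous fun τ => Real.exp (-(σ * τ))).continuousOn).mul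
        ((hc.norm.pow 2).sub continuousOn_const)
    · rw [interior_Icc]
      exact fun τ hτ => (hy τ hτ).differentiableAt.differentiableWithinAt
    · rw [interior_Icc]
      intro τ hτ
      rw [(hy τ hτ).deriv]
      have h1 : inner ℝ (h τ) (lam τ * h τ) = (lam τ).re * ‖h τ‖ ^ 2 := by
        rw [Complex.sq_norm, Complex.inner]
        simp [Complex.normSq_apply]
        ring
      have h2 : -(‖h τ‖ * E) ≤ inner ℝ (h τ) (e τ) := by
        have := neg_le_of_abs_le (abs_real_inner_le_norm (h τ) (e τ))
        have h3 := mul_le_mul_of_nonneg_left (he τ hτ) (norm_nonneg (h τ))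
        linarith
      have h3 := mul_le_mul_of_nonneg_right (hlam τ hτ) (sq_nonneg ‖h τ‖)
      have h4 : 0 ≤ σ * ‖h τ‖ ^ 2 - 2 * (‖h τ‖ * E) + E ^ 2 / σ := by
        have : σ * ‖h τ‖ ^ 2 - 2 * (‖h τ‖ * E) + E ^ 2 / σ = (σ * ‖h τ‖ - E) ^ 2 / σ := by
          field_simp
          ring
        rw [this]
        positivity
      have h5 : σ * (E ^ 2 / σ ^ 2) = E ^ 2 / σ := by field_simp
      have h6 : Real.exp (-(σ * τ)) * -(σ * 1) * (‖h τ‖ ^ 2 - E ^ 2 / σ ^ 2) +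
          Real.exp (-(σ * τ)) * (2 * inner ℝ (h τ) (lam τ * h τ + e τ)) =
          Real.exp (-(σ * τ)) * (2 * ((lam τ).re * ‖h τ‖ ^ 2) - σ * ‖h τ‖ ^ 2 +
            2 * inner ℝ (h τ) (e τ) + E ^ 2 / σ) := by
        rw [inner_add_right, h1, ← h5]
        ring
      rw [h6]
      refine mul_nonneg (Real.exp_pos _).le ?_
      linarith
  have hle := hmono (Set.left_mem_Icc.mpr ht.le) (Set.right_mem_Icc.mpr ht.le) ht.le
  have h1 : Real.exp (-(σ * T)) = Real.exp (-(σ * t)) * Real.exp (-(σ * (T - t))) := by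
    rw [← Real.exp_add]; ring_nf
  simp only [y] at hle
  rw [h1, mul_assoc, mul_le_mul_iff_right₀ (Real.exp_pos _)] at hle
  have hx : 0 < σ * (T - t) := by positivity
  have h2 : Real.exp (-(σ * (T - t))) ≤ (σ * (T - t))⁻¹ := by
    rw [Real.exp_neg]
    gcongr
    linarith [Real.add_one_le_exp (σ * (T - t))]
  have h3 : 0 ≤ E ^ 2 / σ ^ 2 := by positivity
  have h4 : Real.exp (-(σ * (T - t))) * (‖h T‖ ^ 2 - E ^ 2 / σ ^ 2) ≤
      (σ * (T - t))⁻¹ * H ^ 2 := by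
    calc _ ≤ Real.exp (-(σ * (T - t))) * ‖h T‖ ^ 2 := by
            gcongr
            linarith
      _ ≤ _ := by gcongr
  rw [div_eq_inv_mul]
  linarith

theorem norm_sum_div_mul_le {s : Finset ℤ} {g y : ℤ → ℂ} {Δ : ℤ → ℝ} {G Y d : ℝ} (hd : 0 < d)
    (hY : 0 ≤ Y) (hg : ∑ m ∈ s, ‖g m‖ ≤ G) (hΔ : ∀ m ∈ s, d ≤ |Δ m|) (hy : ∀ m ∈ s, ‖y m‖ ≤ Y) :
    ‖∑ m ∈ s, Complex.I * g m / (Δ m : ℝ) * y m‖ ≤ G * Y / d := by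
  calc _ ≤ ∑ m ∈ s, ‖Complex.I * g m / (Δ m : ℝ) * y m‖ := norm_sum_le _ _
    _ ≤ ∑ m ∈ s, ‖g m‖ * (Y / d) := by
        refine Finset.sum_le_sum fun m hm => ?_
        rw [norm_mul, norm_div, norm_mul, Complex.norm_I, one_mul, Complex.norm_real,
          Real.norm_eq_abs, div_mul_eq_mul_div, mul_div_assoc]
        have := hΔ m hm
        have := hy m hm
        gcongr
    _ = (∑ m ∈ s, ‖g m‖) * (Y / d) := by rw [Finset.sum_mul]
    _ ≤ G * (Y / d) := by gcongr
    _ = _ := by ring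

/-- One derivative is gained, backwards in time, from the parabolic term after removing the
nonresonant terms by a normal form transformation. -/
theorem exists_gain {j : ℕ} (hj : 3 ≤ j) {A₁ A₂ A₃ A₄ A₅ c σ δ : ℝ} (hA₁ : 0 ≤ A₁) (hA₂ : 0 ≤ A₂)
    (hA₃ : 0 ≤ A₃) (hA₄ : 0 ≤ A₄) (hA₅ : 0 ≤ A₅) (hc : 0 < c) (hσ : 0 < σ) (hδ : 0 < δ) :
    ∃ C, 0 ≤ C ∧ ∀ (x ρ t T : ℝ) (M : ℕ) (q : ℤ → ℝ) (w N g : ℤ → ℝ → ℂ) (κ : ℝ → ℂ)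
      (s : Finset ℤ) (k : ℤ), 1 ≤ x → 0 < ρ → 1 ≤ M → (M : ℝ) ^ 2 ≤ x → δ ≤ T - t →
      (∀ n, ContinuousOn (w n) (Set.Icc t T)) →
      (∀ m, ContinuousOn (g m) (Set.Icc t T)) →
      (∀ τ ∈ Set.Ioo t T, ∀ n, HasDerivAt (w n) (-Complex.I * q n * w n τ + N n τ) τ) →
      (∀ τ ∈ Set.Ioo t T, ∃ g' : ℤ → ℂ, (∀ m ∈ s, HasDerivAt (g m) (g' m) τ) ∧
        ∑ m ∈ s, ‖g' m‖ ≤ A₂ * x ^ 3 * (1 + M) ^ (2 * j + 1)) →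
      (∀ τ ∈ Set.Icc t T, ∑ m ∈ s, ‖g m τ‖ ≤ A₁ * x ^ 3) →
      (∀ τ ∈ Set.Icc t T, ‖κ τ‖ ≤ A₁ * x ^ 3) →
      (∀ τ ∈ Set.Icc t T, σ * x ^ 2 ≤ (κ τ).re) →
      (∀ m ∈ s, c * x ^ (2 * j) ≤ |q k - q (k - m)|) →
      (∀ τ ∈ Set.Icc t T, ‖w k τ‖ ≤ A₃ * ρ) →
      (∀ τ ∈ Set.Icc t T, ∀ m ∈ s, ‖w (k - m) τ‖ ≤ A₃ * ρ) →
      (∀ τ ∈ Set.Icc t T, ∀ m ∈ s, ‖N (k - m) τ‖ ≤ A₄ * x ^ 3 * ρ) →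
      (∀ τ ∈ Set.Icc t T, ‖N k τ - κ τ * w k τ - ∑ m ∈ s, g m τ * w (k - m) τ‖ ≤ A₅ * x * ρ) →
      ‖w k t‖ ≤ C * ρ / x := by
  set B₀ : ℝ := A₁ * A₃ / c with hB₀
  set E₀ : ℝ := A₅ + A₁ * B₀ + A₂ * 2 ^ (2 * j + 1) * A₃ / c + A₁ * A₄ / c with hE₀
  have hB₀0 : 0 ≤ B₀ := by positivity
  have hE₀0 : 0 ≤ E₀ := by positivity
  refine ⟨√((A₃ + B₀) ^ 2 / (σ * δ) + E₀ ^ 2 / σ ^ 2) + B₀, by positivity, ?_⟩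
  intro x ρ t T M q w N g κ s k hx hρ hM hMx hT hwc hgc hw hg hgs hκ hκre hΔ hwk hy hN hE
  have hx0 : 0 < x := by linarith
  have htT : t < T := by linarith
  have hd : 0 < c * x ^ (2 * j) := by positivity
  have hx6 : x ^ 6 ≤ x ^ (2 * j) := pow_le_pow_right₀ hx (by omega)
  have hq (m) (hm : m ∈ s) : q k - q (k - m) ≠ 0 := by
    have := hΔ m hm
    exact abs_pos.mp (by linarith)
  have hB (τ) (hτ : τ ∈ Set.Icc t T) :
      ‖∑ m ∈ s, Complex.I * g m τ / (q k - q (k - m) : ℝ) * w (k - m) τ‖ ≤ B₀ * ρ / x ^ 3 := by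
    refine (norm_sum_div_mul_le hd (by positivity) (hgs τ hτ) hΔ (hy τ hτ)).trans ?_
    calc _ ≤ A₁ * x ^ 3 * (A₃ * ρ) / (c * x ^ 6) := by gcongr
      _ = _ := by rw [hB₀]; field_simp
  have hx3 : 1 ≤ x ^ 3 := one_le_pow₀ hx
  have hB' (τ) (hτ : τ ∈ Set.Icc t T) :
      ‖∑ m ∈ s, Complex.I * g m τ / (q k - q (k - m) : ℝ) * w (k - m) τ‖ ≤ B₀ * ρ :=
    (hB τ hτ).trans (div_le_self (by positivity) hx3)
  choose! g' hg' hg's using hg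
  have hM1 : (1 : ℝ) ≤ M := by exact_mod_cast hM
  have hMpow : (1 + M : ℝ) ^ (2 * j + 1) ≤ 2 ^ (2 * j + 1) * x ^ (2 * j - 2) := by
    calc _ ≤ (2 * M : ℝ) ^ (2 * j + 1) := by gcongr; linarith
      _ = 2 ^ (2 * j + 1) * (M : ℝ) ^ (2 * j + 1) := mul_pow _ _ _
      _ ≤ 2 ^ (2 * j + 1) * (M : ℝ) ^ (2 * (2 * j - 2)) := by
          gcongr
          omega
      _ = 2 ^ (2 * j + 1) * ((M : ℝ) ^ 2) ^ (2 * j - 2) := by rw [pow_mul]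
      _ ≤ _ := by gcongr
  have herr (τ) (hτ : τ ∈ Set.Ioo t T) :
      ‖(N k τ - κ τ * w k τ - ∑ m ∈ s, g m τ * w (k - m) τ) -
          κ τ * (∑ m ∈ s, Complex.I * g m τ / (q k - q (k - m) : ℝ) * w (k - m) τ) +
          ∑ m ∈ s, Complex.I * g' τ m / (q k - q (k - m) : ℝ) * w (k - m) τ +
          ∑ m ∈ s, Complex.I * g m τ / (q k - q (k - m) : ℝ) * N (k - m) τ‖ ≤ E₀ * (x * ρ) := by
    have hτ' := Set.Ioo_subset_Icc_self hτ
    have h2 : ‖κ τ * (∑ m ∈ s, Complex.I * g m τ / (q k - q (k - m) : ℝ) * w (k - m) τ)‖ ≤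
        A₁ * B₀ * (x * ρ) := by
      rw [norm_mul]
      calc _ ≤ A₁ * x ^ 3 * (B₀ * ρ / x ^ 3) :=
            mul_le_mul (hκ τ hτ') (hB τ hτ') (norm_nonneg _) (by positivity)
        _ = A₁ * B₀ * (1 * ρ) := by field_simp
        _ ≤ _ := by gcongr
    have h3 : ‖∑ m ∈ s, Complex.I * g' τ m / (q k - q (k - m) : ℝ) * w (k - m) τ‖ ≤
        A₂ * 2 ^ (2 * j + 1) * A₃ / c * (x * ρ) := by
      refine (norm_sum_div_mul_le hd (by positivity) (hg's τ hτ) hΔ (hy τ hτ')).trans ?_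
      calc _ ≤ A₂ * x ^ 3 * (2 ^ (2 * j + 1) * x ^ (2 * j - 2)) * (A₃ * ρ) / (c * x ^ (2 * j)) := by
              gcongr
        _ = _ := by
              have : x ^ (2 * j) = x ^ (2 * j - 2) * x ^ 2 := by rw [← pow_add]; congr 1; omega
              rw [this]
              field_simp
    have h4 : ‖∑ m ∈ s, Complex.I * g m τ / (q k - q (k - m) : ℝ) * N (k - m) τ‖ ≤
        A₁ * A₄ / c * (x * ρ) := by
      refine (norm_sum_div_mul_le hd (by positivity) (hgs τ hτ') hΔ (hN τ hτ')).trans ?_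
      calc _ ≤ A₁ * x ^ 3 * (A₄ * x ^ 3 * ρ) / (c * x ^ 6) := by gcongr
        _ = A₁ * A₄ / c * (1 * ρ) := by field_simp
        _ ≤ _ := by gcongr
    have h1 := hE τ hτ'
    refine (norm_add_le_of_le (norm_add_le_of_le (norm_sub_le_of_le h1 h2) h3) h4).trans
      (le_of_eq ?_)
    rw [hE₀]
    ring
  have hcont : ContinuousOn (fun τ => w k τ +
      ∑ m ∈ s, Complex.I * g m τ / (q k - q (k - m) : ℝ) * w (k - m) τ) (Set.Icc t T) :=
    (hwc k).add (continuousOn_finsetSum s fun m _ =>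
      ((continuousOn_const.mul (hgc m)).div_const _).mul (hwc (k - m)))
  have hsq := norm_sq_le_of_backward (σ := σ * x ^ 2) (by positivity) htT hcont
    (fun τ hτ => hasDerivAt_normal_form (κ τ) (hw τ hτ) (hg' τ hτ) hq)
    (fun τ hτ => by
      have := hκre τ (Set.Ioo_subset_Icc_self hτ)
      simpa using this) herr
    (norm_add_le_of_le (hwk T (Set.right_mem_Icc.mpr htT.le))
      (hB' T (Set.right_mem_Icc.mpr htT.le)))
  have htI := Set.left_mem_Icc.mpr htT.le
  set h := w k t + ∑ m ∈ s, Complex.I * g m t / (q k - q (k - m) : ℝ) * w (k - m) t with hh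
  have hsq' : ‖h‖ ^ 2 ≤ (√((A₃ + B₀) ^ 2 / (σ * δ) + E₀ ^ 2 / σ ^ 2) * ρ / x) ^ 2 := by
    rw [div_pow, mul_pow, Real.sq_sqrt (by positivity)]
    calc _ ≤ _ := hsq
      _ ≤ (A₃ * ρ + B₀ * ρ) ^ 2 / (σ * x ^ 2 * δ) + (E₀ * (x * ρ)) ^ 2 / (σ * x ^ 2) ^ 2 := by
          gcongr
      _ = _ := by field_simp
  have hn : ‖h‖ ≤ √((A₃ + B₀) ^ 2 / (σ * δ) + E₀ ^ 2 / σ ^ 2) * ρ / x :=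
    (pow_le_pow_iff_left₀ (norm_nonneg _) (by positivity) two_ne_zero).mp hsq'
  have hBx : B₀ * ρ / x ^ 3 ≤ B₀ * ρ / x := by
    gcongr
    exact le_self_pow₀ hx (by norm_num)
  have hw' : w k t = h - ∑ m ∈ s, Complex.I * g m t / (q k - q (k - m) : ℝ) * w (k - m) t := by
    rw [hh]; ring
  rw [hw']
  refine (norm_sub_le_of_le hn ((hB t htI).trans hBx)).trans (le_of_eq ?_)
  ring

/-- The linear part of the flow, on the Fourier side: the dispersion relation `q` has order
`2j + 1` and separates the frequencies `k` and `k - m` for `m` small with respect to `k`. -/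
structure Dispersive (j : ℕ) (q : ℤ → ℝ) : Prop where
  nonres : ∃ c > 0, ∃ K : ℝ, ∀ k m : ℤ, K ≤ |(k : ℝ)| → m ≠ 0 → 2 * |(m : ℝ)| ≤ |(k : ℝ)| →
    c * |(k : ℝ)| ^ (2 * j) ≤ |q k - q (k - m)|
  growth : ∃ C, ∀ k : ℤ, |q k| ≤ C * (1 + |(k : ℝ)|) ^ (2 * j + 1)

/-- Uniform polynomial decay of order `s` on `[0, τ]`. -/
def Decay (s : ℕ) (w : ℤ → ℝ → ℂ) (τ : ℝ) : Prop :=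
  ∃ C, ∀ t ∈ Set.Icc 0 τ, ∀ k : ℤ, (1 + |(k : ℝ)|) ^ s * ‖w k t‖ ≤ C

open MvPolynomial in
/-- A solution on `[0, τ]` seen through its Fourier coefficients `w`, where `V t l` is the `l`-th
space derivative at time `t` and `P` is the nonlinearity, parabolic in the bad direction. -/
structure Flow (q : ℤ → ℝ) (P : MvPolynomial (Fin 4) ℝ) (w : ℤ → ℝ → ℂ)
    (V : ℝ → Fin 4 → CircleFun) (τ : ℝ) : Prop where
  coef_eq : ∀ t ∈ Set.Icc 0 τ, ∀ l k, coef k (V t l) = (Complex.I * k) ^ (l : ℕ) * w k t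
  star_eq : ∀ t ∈ Set.Icc 0 τ, ∀ l, star (V t l) = V t l
  cont : ∀ k, ContinuousOn (w k) (Set.Icc 0 τ)
  hasDerivAt : ∀ t ∈ Set.Ioo 0 τ, ∀ k,
    HasDerivAt (w k) (-Complex.I * q k * w k t + coef k (aeval (V t) P)) t
  para : ∃ ε > 0, ∃ c > 0, ∀ t ∈ Set.Icc 0 τ, ∀ v : Fin 4 → CircleFun,
    (∀ l, ‖v l - V t l‖ < ε) → (coef 0 (aeval v (pderiv 2 P))).re ≤ -c

theorem Flow.mono {q : ℤ → ℝ} {P : MvPolynomial (Fin 4) ℝ} {w : ℤ → ℝ → ℂ}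
    {V : ℝ → Fin 4 → CircleFun} {τ τ' : ℝ} (h : Flow q P w V τ) (hτ : τ' ≤ τ) :
    Flow q P w V τ' := by
  have hI : Set.Icc 0 τ' ⊆ Set.Icc 0 τ := Set.Icc_subset_Icc_right hτ
  obtain ⟨ε, hε, c, hc, hp⟩ := h.para
  exact ⟨fun t ht => h.coef_eq t (hI ht), fun t ht => h.star_eq t (hI ht),
    fun k => (h.cont k).mono hI, fun t ht => h.hasDerivAt t (Set.Ioo_subset_Ioo_right hτ ht),
    ε, hε, c, hc, fun t ht => hp t (hI ht)⟩

theorem Tame.sum_norm_coef_le {r : ℕ} {A α : ℝ} {f : CircleFun} (h : Tame r A α f)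
    (s : Finset ℤ) : ∑ m ∈ s, ‖coef m f‖ ≤ α :=
  (h.summable.sum_le_tsum s fun _ _ => norm_nonneg _).trans h.tsum_le

/-- The coefficient at frequency `m` of a third-order differential operator acting at output
frequency `k`. -/
noncomputable def symbol (e : Fin 4 → CircleFun) (k m : ℤ) : ℂ :=
  ∑ l, coef m (e l) * (Complex.I * (k - m : ℤ)) ^ (l : ℕ)

theorem norm_I_mul_pow_le {n : ℤ} {y : ℝ} (hy : 1 ≤ y) (hn : |(n : ℝ)| ≤ y) (l : Fin 4) :
    ‖(Complex.I * n) ^ (l : ℕ)‖ ≤ y ^ 3 := by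
  rw [norm_pow, norm_mul, Complex.norm_I, one_mul, Complex.norm_intCast]
  calc _ ≤ y ^ (l : ℕ) := by gcongr
    _ ≤ _ := pow_le_pow_right₀ hy (by omega)

theorem sum_norm_symbol_le {e : Fin 4 → CircleFun} {α x : ℝ} {s : Finset ℤ} {k : ℤ} (hx : 1 ≤ x)
    (he : ∀ l, ∑ m ∈ s, ‖coef m (e l)‖ ≤ α) (hs : ∀ m ∈ s, |((k - m : ℤ) : ℝ)| ≤ 2 * x) :
    ∑ m ∈ s, ‖symbol e k m‖ ≤ 32 * α * x ^ 3 := by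
  have h (m) (hm : m ∈ s) : ‖symbol e k m‖ ≤ ∑ l, ‖coef m (e l)‖ * (2 * x) ^ 3 := by
    refine (norm_sum_le _ _).trans (Finset.sum_le_sum fun l _ => ?_)
    rw [norm_mul]
    exact mul_le_mul_of_nonneg_left (norm_I_mul_pow_le (by linarith) (hs m hm) l) (norm_nonneg _)
  calc _ ≤ ∑ m ∈ s, ∑ l, ‖coef m (e l)‖ * (2 * x) ^ 3 := Finset.sum_le_sum h
    _ = ∑ l, (∑ m ∈ s, ‖coef m (e l)‖) * (2 * x) ^ 3 := by
        rw [Finset.sum_comm]; simp only [Finset.sum_mul]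
    _ ≤ ∑ _l : Fin 4, α * (2 * x) ^ 3 := by
        gcongr with l
        exact he l
    _ = _ := by simp; ring

theorem symbol_zero_re {e : Fin 4 → CircleFun} (he : ∀ l, star (e l) = e l) (k : ℤ) :
    (symbol e k 0).re = (coef 0 (e 0)).re - (k : ℝ) ^ 2 * (coef 0 (e 2)).re := by
  have h1 := coef_zero_im (he 1)
  have h3 := coef_zero_im (he 3)
  simp only [symbol, Fin.sum_univ_four, Fin.val_zero, Fin.val_one, Fin.val_two, sub_zero,
    mul_pow, show ((3 : Fin 4) : ℕ) = 3 from rfl, Complex.I_sq, Complex.I_pow_three]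
  have e2 : ((k : ℂ) ^ 2).re = (k : ℝ) ^ 2 := by
    rw [← Complex.ofReal_intCast, ← Complex.ofReal_pow, Complex.ofReal_re]
  have e2' : ((k : ℂ) ^ 2).im = 0 := by exact_mod_cast Complex.ofReal_im ((k : ℝ) ^ 2)
  have e3 : ((k : ℂ) ^ 3).im = 0 := by exact_mod_cast Complex.ofReal_im ((k : ℝ) ^ 3)
  simp [Complex.add_re, Complex.mul_re, h1, h3, e2, e2', e3]
  ring

section

variable {j r : ℕ} {q : ℤ → ℝ} {P : MvPolynomial (Fin 4) ℝ} {w : ℤ → ℝ → ℂ}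
  {V : ℝ → Fin 4 → CircleFun} {τ t A : ℝ}

theorem Flow.coef_le (h : Flow q P w V τ) (ht : t ∈ Set.Icc 0 τ)
    (hA : ∀ k : ℤ, (1 + |(k : ℝ)|) ^ (r + 3) * ‖w k t‖ ≤ A) (l : Fin 4) (k : ℤ) :
    (1 + |(k : ℝ)|) ^ r * ‖coef k (V t l)‖ ≤ A := by
  rw [h.coef_eq t ht, norm_mul]
  calc _ ≤ (1 + |(k : ℝ)|) ^ r * ((1 + |(k : ℝ)|) ^ 3 * ‖w k t‖) := by
        gcongr
        exact norm_I_mul_pow_le (by linarith [abs_nonneg (k : ℝ)]) (by linarith) l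
    _ = (1 + |(k : ℝ)|) ^ (r + 3) * ‖w k t‖ := by ring
    _ ≤ A := hA k

theorem Flow.continuousOn_cut (h : Flow q P w V τ) (M : ℕ) (l : Fin 4) :
    ContinuousOn (fun s => cut M (V s l)) (Set.Icc 0 τ) := by
  unfold cut
  refine continuousOn_finsetSum _ fun m _ => ContinuousOn.fun_smul ?_ continuousOn_const
  refine (continuousOn_const.mul (h.cont m)).congr fun s hs => h.coef_eq s hs l m

theorem Flow.hasDerivAt_cut (h : Flow q P w V τ) (M : ℕ) (l : Fin 4) (ht : t ∈ Set.Ioo 0 τ) :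
    HasDerivAt (fun s => cut M (V s l)) (∑ m ∈ Finset.Icc (-(M : ℤ)) M, ((Complex.I * m) ^ (l : ℕ) *
      (-Complex.I * q m * w m t + coef m (MvPolynomial.aeval (V t) P))) •
        (fourier m : CircleFun)) t := by
  unfold cut
  refine HasDerivAt.fun_sum fun m _ => HasDerivAt.smul_const ?_ _
  refine ((h.hasDerivAt t ht m).const_mul _).congr_of_eventuallyEq ?_
  filter_upwards [Ioo_mem_nhds ht.1 ht.2] with s hs
  exact h.coef_eq s (Set.Ioo_subset_Icc_self hs) l m

theorem coef_sum_smul_fourier (M : ℕ) (a : ℤ → ℂ) (k : ℤ) :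
    coef k (∑ m ∈ Finset.Icc (-(M : ℤ)) M, a m • (fourier m : CircleFun)) =
      if |k| ≤ M then a k else 0 := by
  simp only [map_sum, map_smul, coef_fourier, smul_eq_mul, mul_ite, mul_one, mul_zero,
    Finset.sum_ite_eq, Finset.mem_Icc, abs_le]

/-- The time derivative of the truncation of a solution. -/
theorem Flow.exists_hasDerivAt_cut (h : Flow q P w V τ) (hq : Dispersive j q) (hr : 5 ≤ r) {B : ℝ}
    (hA : ∀ t ∈ Set.Icc 0 τ, ∀ k : ℤ, (1 + |(k : ℝ)|) ^ (r + 3) * ‖w k t‖ ≤ A)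
    (hB : ∀ t ∈ Set.Icc 0 τ, ∀ k : ℤ,
      (1 + |(k : ℝ)|) ^ r * ‖coef k (MvPolynomial.aeval (V t) P)‖ ≤ B) :
    ∃ C, 0 ≤ C ∧ ∀ t ∈ Set.Ioo 0 τ, ∀ M : ℕ, ∃ d : Fin 4 → CircleFun, ∀ l,
      HasDerivAt (fun s => cut M (V s l)) (d l) t ∧
      ∀ k : ℤ, (1 + |(k : ℝ)|) ^ 2 * ‖coef k (d l)‖ ≤ C * (1 + M) ^ (2 * j + 1) := by
  obtain ⟨Cq, hCq⟩ := hq.growth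
  refine ⟨|Cq * A + B|, abs_nonneg _, fun t ht M => ⟨_, fun l => ⟨h.hasDerivAt_cut M l ht,
    fun k => ?_⟩⟩⟩
  have ht' := Set.Ioo_subset_Icc_self ht
  rw [coef_sum_smul_fourier M (fun m => (Complex.I * m) ^ (l : ℕ) *
      (-Complex.I * q m * w m t + coef m (MvPolynomial.aeval (V t) P)))]
  split_ifs with hk
  · have hk' : |(k : ℝ)| ≤ M := by exact_mod_cast hk
    set y := 1 + |(k : ℝ)| with hy
    have hy1 : 1 ≤ y := by linarith [abs_nonneg (k : ℝ)]
    have hC0 : 0 ≤ Cq := by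
      have := (abs_nonneg _).trans (hCq k)
      exact nonneg_of_mul_nonneg_left this (by positivity)
    rw [norm_mul]
    have h1 : ‖-Complex.I * q k * w k t‖ ≤ Cq * y ^ (2 * j + 1) * ‖w k t‖ := by
      rw [norm_mul, norm_mul, norm_neg, Complex.norm_I, one_mul, Complex.norm_real]
      exact mul_le_mul_of_nonneg_right (hCq k) (norm_nonneg _)
    calc _ ≤ y ^ 2 * (y ^ 3 * (Cq * y ^ (2 * j + 1) * ‖w k t‖ +
          ‖coef k (MvPolynomial.aeval (V t) P)‖)) := by
          gcongr
          · exact norm_I_mul_pow_le hy1 (by linarith) l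
          · exact norm_add_le_of_le h1 le_rfl
      _ = Cq * y ^ (2 * j + 1) * (y ^ 5 * ‖w k t‖) +
          1 * (y ^ 5 * ‖coef k (MvPolynomial.aeval (V t) P)‖) := by ring
      _ ≤ Cq * y ^ (2 * j + 1) * A + y ^ (2 * j + 1) * B := by
          have e1 : y ^ 5 * ‖w k t‖ ≤ A := (mul_le_mul_of_nonneg_right
            (pow_le_pow_right₀ hy1 (by omega)) (norm_nonneg _)).trans (hA t ht' k)
          have e2 : y ^ 5 * ‖coef k (MvPolynomial.aeval (V t) P)‖ ≤ B :=
            (mul_le_mul_of_nonneg_right (pow_le_pow_right₀ hy1 hr) (norm_nonneg _)).trans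
              (hB t ht' k)
          gcongr
          exact one_le_pow₀ hy1
      _ = (Cq * A + B) * y ^ (2 * j + 1) := by ring
      _ ≤ |Cq * A + B| * (1 + M) ^ (2 * j + 1) := by
          gcongr
          · exact le_abs_self _
          · linarith
  · rw [norm_zero, mul_zero]; positivity

end

theorem Tame.of_le {r r' : ℕ} {A α : ℝ} {f : CircleFun} (h : Tame r A α f) (hr : r' ≤ r) :
    Tame r' A α f :=
  ⟨h.summable, h.tsum_le, fun k => (mul_le_mul_of_nonneg_right
    (pow_le_pow_right₀ (by linarith [abs_nonneg (k : ℝ)]) hr) (norm_nonneg _)).trans (h.bound k)⟩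

open MvPolynomial in
theorem exists_sum_norm_coef_pderiv_le (P : MvPolynomial (Fin 4) ℝ) (r : ℕ) (A α : ℝ) :
    ∃ α', 0 ≤ α' ∧ ∀ v : Fin 4 → CircleFun, (∀ i, Tame r A α (v i)) → ∀ l (s : Finset ℤ),
      ∑ m ∈ s, ‖coef m (aeval v (pderiv l P))‖ ≤ α' := by
  choose A' α' _ hα' h using fun l => Tame.exists_aeval (pderiv l P) r A α
  exact ⟨∑ l, α' l, Finset.sum_nonneg fun l _ => hα' l, fun v hv l s =>
    ((h l v hv).sum_norm_coef_le s).trans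
      (Finset.single_le_sum (fun l _ => hα' l) (Finset.mem_univ l))⟩

open MvPolynomial in
theorem exists_sum_norm_coef_pderiv_pderiv_le (P : MvPolynomial (Fin 4) ℝ) (r : ℕ) (A α : ℝ) :
    ∃ α', 0 ≤ α' ∧ ∀ v d : Fin 4 → CircleFun, (∀ i, Tame r A α (v i)) →
      ∀ B β, (∀ i, Tame r B β (d i)) → ∀ l (s : Finset ℤ),
        ∑ m ∈ s, ‖coef m (∑ i, aeval v (pderiv i (pderiv l P)) * d i)‖ ≤ α' * β := by
  choose A' α' _ hα' h using fun l i => Tame.exists_aeval (pderiv i (pderiv l P)) r A α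
  refine ⟨∑ l, ∑ i, α' l i, Finset.sum_nonneg fun l _ => Finset.sum_nonneg fun i _ => hα' l i,
    fun v d hv B β hd l s => ?_⟩
  have hβ : 0 ≤ β := (hd 0).nonneg_right
  calc _ ≤ ∑ m ∈ s, ∑ i, ‖coef m (aeval v (pderiv i (pderiv l P)) * d i)‖ := by
        refine Finset.sum_le_sum fun m _ => ?_
        rw [map_sum]
        exact norm_sum_le _ _
    _ = ∑ i, ∑ m ∈ s, ‖coef m (aeval v (pderiv i (pderiv l P)) * d i)‖ := Finset.sum_comm
    _ ≤ ∑ i, α' l i * β :=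
        Finset.sum_le_sum fun i _ => ((h l i v hv).mul (hd i)).sum_norm_coef_le s
    _ = (∑ i, α' l i) * β := by rw [Finset.sum_mul]
    _ ≤ _ := mul_le_mul_of_nonneg_right (Finset.single_le_sum (f := fun l => ∑ i, α' l i)
        (fun l _ => Finset.sum_nonneg fun i _ => hα' l i) (Finset.mem_univ l)) hβ

theorem le_of_weight_mul_le {s : ℕ} {x y a A : ℝ} (hx : 0 < x) (hy : x / 2 ≤ y) (ha : 0 ≤ a)
    (h : (1 + y) ^ s * a ≤ A) : a ≤ 2 ^ s * A * (x ^ s)⁻¹ := by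
  rw [← div_eq_mul_inv, le_div_iff₀ (by positivity)]
  calc a * x ^ s = 2 ^ s * ((x / 2) ^ s * a) := by rw [div_pow]; field_simp
    _ ≤ 2 ^ s * ((1 + y) ^ s * a) := by
        gcongr
        linarith
    _ ≤ _ := by gcongr

set_option maxHeartbeats 1000000 in
theorem Flow.decay_succ {j r : ℕ} {q : ℤ → ℝ} {P : MvPolynomial (Fin 4) ℝ} {w : ℤ → ℝ → ℂ}
    {V : ℝ → Fin 4 → CircleFun} {τ τ' : ℝ} (h : Flow q P w V τ) (hj : 3 ≤ j)
    (hq : Dispersive j q) (hr : 6 ≤ r) (hd : Decay (r + 3) w τ) (hτ : τ' < τ) :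
    Decay (r + 4) w τ' := by
  obtain ⟨A₀, hA₀⟩ := hd
  obtain ⟨A, hA0, hA⟩ : ∃ A, 0 ≤ A ∧ ∀ t ∈ Set.Icc 0 τ, ∀ k : ℤ,
      (1 + |(k : ℝ)|) ^ (r + 3) * ‖w k t‖ ≤ A :=
    ⟨|A₀|, abs_nonneg _, fun t ht k => (hA₀ t ht k).trans (le_abs_self _)⟩
  have hcoef (t) (ht : t ∈ Set.Icc 0 τ) (l) (k) := h.coef_le ht (hA t ht) l k
  have hV (t) (ht : t ∈ Set.Icc 0 τ) (l) : Tame r A (A * weightSum) (V t l) :=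
    Tame.of_bound (by omega) (hcoef t ht l)
  have hcut (t) (ht : t ∈ Set.Icc 0 τ) (M : ℕ) (l) : Tame r A (A * weightSum) (cut M (V t l)) :=
    (hV t ht l).of_norm_coef_le (norm_coef_cut_le M _)
  obtain ⟨B, β, hB0, -, hB⟩ := Tame.exists_aeval P r A (A * weightSum)
  obtain ⟨α, hα0, hα⟩ := exists_sum_norm_coef_pderiv_le P r A (A * weightSum)
  obtain ⟨α₂, hα₂0, hα₂⟩ := exists_sum_norm_coef_pderiv_pderiv_le P 2 A (A * weightSum)
  obtain ⟨G, hG0, hG⟩ := h.exists_hasDerivAt_cut hq (by omega) hA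
    fun t ht => (hB _ (hV t ht)).bound
  obtain ⟨D, Cp, hCp0, hCp⟩ := exists_paralinearization P hr A
  obtain ⟨c, hc, K, hK⟩ := hq.nonres
  obtain ⟨ε, hε, σ, hσ, hpara⟩ := h.para
  have hW := weightSum_nonneg
  obtain ⟨C, hC0, hC⟩ := exists_gain hj (A₁ := 32 * α) (A₂ := 32 * (α₂ * (G * weightSum)))
    (A₃ := 2 ^ (r + 3) * A) (A₄ := 2 ^ r * B) (A₅ := 2 ^ r * Cp) (c := c) (σ := σ / 2) (δ := τ - τ')
    (by positivity) (by positivity) (by positivity) (by positivity) (by positivity) hc (by positivity)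
    (by linarith)
  set X : ℝ := |K| + ((2 * D + 2 : ℕ) : ℝ) ^ 2 + 2 * α / σ + A * weightSum / ε + 1 with hX
  have hX1 : 0 ≤ 2 * α / σ := by positivity
  have hX2 : 0 ≤ A * weightSum / ε := by positivity
  refine ⟨2 ^ (r + 4) * C + (1 + X) * A, fun t ht k => ?_⟩
  have htτ : Set.Icc t τ ⊆ Set.Icc 0 τ := Set.Icc_subset_Icc_left ht.1
  have htτ' : Set.Ioo t τ ⊆ Set.Ioo 0 τ := Set.Ioo_subset_Ioo_left ht.1
  have ht0 : t ∈ Set.Icc 0 τ := ⟨ht.1, ht.2.trans hτ.le⟩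
  set x := |(k : ℝ)| with hx
  rcases lt_or_ge x X with hxX | hxX
  · calc _ = (1 + x) * ((1 + x) ^ (r + 3) * ‖w k t‖) := by ring
      _ ≤ (1 + X) * A := by
          have := hA t ht0 k
          have hx0 : 0 ≤ x := abs_nonneg _
          gcongr
      _ ≤ _ := by linarith [show 0 ≤ 2 ^ (r + 4) * C by positivity]
  have hD0 : (0 : ℝ) ≤ ((2 * D + 2 : ℕ) : ℝ) ^ 2 := by positivity
  have hx1 : 1 ≤ x := by linarith [abs_nonneg K]
  have hx0 : 0 < x := by linarith
  have hxx : x ≤ x ^ 2 := le_self_pow₀ hx1 two_ne_zero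
  set M := Nat.sqrt k.natAbs with hM
  have hxk : x = (k.natAbs : ℝ) := by rw [hx, Nat.cast_natAbs, Int.cast_abs]
  have hMx : (M : ℝ) ^ 2 ≤ x := by
    rw [hxk]; exact_mod_cast Nat.sqrt_le' _
  have hxM : x ≤ (1 + M : ℝ) ^ 2 := by
    rw [hxk, add_comm]; exact_mod_cast (Nat.lt_succ_sqrt' _).le
  have hDM : 2 * D + 2 ≤ M := by
    rw [hM, Nat.le_sqrt']
    have : ((2 * D + 2 : ℕ) : ℝ) ^ 2 ≤ k.natAbs := by rw [← hxk]; linarith [abs_nonneg K]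
    exact_mod_cast this
  have hDMx : (2 * D + 2 : ℝ) * M ≤ x := by
    have : (2 * D + 2 : ℝ) ≤ M := by exact_mod_cast hDM
    nlinarith
  have hM1 : (1 : ℝ) ≤ M := by exact_mod_cast (by omega : 1 ≤ M)
  set s := (Finset.Icc (-((D * M : ℕ) : ℤ)) (D * M : ℕ)).erase 0 with hs
  have hms (m) (hm : m ∈ s) : m ≠ 0 ∧ 2 * |(m : ℝ)| ≤ x := by
    rw [hs, Finset.mem_erase, Finset.mem_Icc, ← abs_le] at hm
    have h2 : |(m : ℝ)| ≤ D * M := by exact_mod_cast hm.2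
    have h0 : (0 : ℝ) ≤ D * M := by positivity
    exact ⟨hm.1, by linarith⟩
  have hkm (m : ℤ) (hm : 2 * |(m : ℝ)| ≤ x) :
      x / 2 ≤ |((k - m : ℤ) : ℝ)| ∧ |((k - m : ℤ) : ℝ)| ≤ 2 * x := by
    push_cast
    constructor
    · linarith [abs_sub_abs_le_abs_sub (k : ℝ) m]
    · linarith [abs_sub (k : ℝ) m]
  set e : ℝ → Fin 4 → CircleFun := fun z l =>
    MvPolynomial.aeval (fun i => cut M (V z i)) (MvPolynomial.pderiv l P) with he
  have hmem0 : (0 : ℤ) ∈ Finset.Icc (-((D * M : ℕ) : ℤ)) (D * M : ℕ) := by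
    simp only [Finset.mem_Icc]
    omega
  have key := hC x (x ^ (r + 3))⁻¹ t τ M q w (fun n z => coef n (MvPolynomial.aeval (V z) P))
    (fun m z => symbol (e z) k m) (fun z => symbol (e z) k 0) s k hx1 (by positivity)
    (by omega) hMx (by linarith [ht.2]) (fun n => (h.cont n).mono htτ)
    (fun m => ?_) (fun z hz n => h.hasDerivAt z (htτ' hz) n) (fun z hz => ?_) (fun z hz => ?_)
    (fun z hz => ?_) (fun z hz => ?_) (fun m hm => ?_) (fun z hz => ?_) (fun z hz m hm => ?_)
    (fun z hz m hm => ?_) (fun z hz => ?_)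
  · calc _ ≤ (2 * x) ^ (r + 4) * (C * (x ^ (r + 3))⁻¹ / x) := by
          gcongr
          linarith
      _ = 2 ^ (r + 4) * C := by rw [mul_pow, pow_succ x (r + 3)]; field_simp
      _ ≤ _ := by
          have : 0 ≤ (1 + X) * A := mul_nonneg (by linarith [abs_nonneg K]) hA0
          linarith
  · unfold symbol
    refine continuousOn_finsetSum _ fun l _ => ContinuousOn.mul ?_ continuousOn_const
    refine (coef m).continuous.comp_continuousOn
      ((continuous_aeval (MvPolynomial.pderiv l P)).comp_continuousOn ?_)
    exact continuousOn_pi.mpr fun i => (h.continuousOn_cut M i).mono htτ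
  · obtain ⟨d, hd⟩ := hG z (htτ' hz) M
    refine ⟨fun m => symbol (fun l => ∑ i, MvPolynomial.aeval (fun i => cut M (V z i))
      (MvPolynomial.pderiv i (MvPolynomial.pderiv l P)) * d i) k m, fun m _ => ?_, ?_⟩
    · unfold symbol
      refine HasDerivAt.fun_sum fun l _ => HasDerivAt.mul_const ?_ _
      exact ((coef m).restrictScalars ℝ).hasFDerivAt.comp_hasDerivAt z
        (hasDerivAt_aeval _ fun i => (hd i).1)
    · refine (sum_norm_symbol_le hx1 (fun l => hα₂ _ d
        (fun i => (hcut z (htτ (Set.Ioo_subset_Icc_self hz)) M i).of_le (by omega)) _ _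
        (fun i => Tame.of_bound le_rfl (hd i).2) l s)
        fun m hm => (hkm m (hms m hm).2).2).trans (le_of_eq ?_)
      ring
  · exact sum_norm_symbol_le hx1 (fun l => hα _ (hcut z (htτ hz) M) l s)
      fun m hm => (hkm m (hms m hm).2).2
  · have := sum_norm_symbol_le (s := {0}) (k := k) hx1
      (fun l => hα _ (hcut z (htτ hz) M) l {0}) fun m hm => (hkm m (by
        rw [Finset.mem_singleton.mp hm, Int.cast_zero, abs_zero, mul_zero]
        exact hx0.le)).2
    rwa [Finset.sum_singleton] at this
  · have hst (l) : star (e z l) = e z l :=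
      star_aeval _ fun i => star_cut M (h.star_eq z (htτ hz) i)
    rw [symbol_zero_re hst]
    have h0 : -α ≤ (coef 0 (e z 0)).re := by
      have := hα _ (hcut z (htτ hz) M) 0 {0}
      rw [Finset.sum_singleton] at this
      exact neg_le_of_abs_le ((Complex.abs_re_le_norm _).trans this)
    have h2 : (coef 0 (e z 2)).re ≤ -σ := by
      refine hpara z (htτ hz) _ fun l => ?_
      have ht := tame_sub_cut hr (hcoef z (htτ hz) l) M
      rw [norm_sub_rev]
      refine ((norm_le_tsum_coef ht.summable).trans ht.tsum_le).trans_lt ?_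
      rw [div_mul_eq_mul_div, div_lt_iff₀ (by positivity)]
      have h3 : A * weightSum / ε < (1 + M : ℝ) ^ 4 := by
        calc _ < x := by linarith [abs_nonneg K]
          _ ≤ x ^ 2 := hxx
          _ ≤ ((1 + M : ℝ) ^ 2) ^ 2 := by gcongr
          _ = _ := by ring
      rw [div_lt_iff₀ hε] at h3
      linarith
    have h4 : 2 * α / σ ≤ x ^ 2 := by linarith [abs_nonneg K]
    rw [div_le_iff₀ hσ] at h4
    have h5 : (k : ℝ) ^ 2 = x ^ 2 := by rw [hx, sq_abs]
    rw [h5]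
    nlinarith [sq_nonneg x]
  · exact hK k m (by linarith [le_abs_self K]) (hms m hm).1 (hms m hm).2
  · exact le_of_weight_mul_le hx0 (by linarith) (norm_nonneg _) (hA z (htτ hz) k)
  · exact le_of_weight_mul_le hx0 (hkm m (hms m hm).2).1 (norm_nonneg _) (hA z (htτ hz) _)
  · refine (le_of_weight_mul_le hx0 (hkm m (hms m hm).2).1 (norm_nonneg _)
      ((hB _ (hV z (htτ hz))).bound (k - m))).trans (le_of_eq ?_)
    rw [pow_add]
    field_simp
  · have hp := hCp (V z) (hcoef z (htτ hz)) M k (by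
      have : ((D + 1) * M : ℝ) < x := by nlinarith
      rw [hx] at this
      exact_mod_cast this)
    have hsum : ∑ m ∈ Finset.Icc (-((D * M : ℕ) : ℤ)) (D * M : ℕ),
        ∑ l, coef m (e z l) * coef (k - m) (V z l) =
        symbol (e z) k 0 * w k z + ∑ m ∈ s, symbol (e z) k m * w (k - m) z := by
      have hm (m : ℤ) : ∑ l, coef m (e z l) * coef (k - m) (V z l) =
          symbol (e z) k m * w (k - m) z := by
        simp only [symbol, Finset.sum_mul, h.coef_eq z (htτ hz), mul_assoc]
      simp only [hm]
      rw [← Finset.add_sum_erase _ _ hmem0, sub_zero]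
    rw [hsum, ← sub_sub] at hp
    refine (le_of_weight_mul_le hx0 (by linarith) (norm_nonneg _) hp).trans ?_
    have h3 : Cp / (1 + M : ℝ) ^ 4 ≤ Cp / x ^ 2 := by
      gcongr
      calc _ ≤ ((1 + M : ℝ) ^ 2) ^ 2 := by gcongr
        _ = _ := by ring
    calc _ ≤ 2 ^ r * (Cp / x ^ 2) * (x ^ r)⁻¹ := by gcongr
      _ = _ := by
          rw [pow_add]
          field_simp

/-- A flow that decays at some positive time span decays to all orders on shorter spans. -/
theorem Flow.decay_all {j : ℕ} {q : ℤ → ℝ} {P : MvPolynomial (Fin 4) ℝ} {w : ℤ → ℝ → ℂ}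
    {V : ℝ → Fin 4 → CircleFun} {τ : ℝ} (h : Flow q P w V τ) (hj : 3 ≤ j)
    (hq : Dispersive j q) (hd : Decay 13 w τ) (n : ℕ) :
    ∀ τ' < τ, Decay (n + 13) w τ' := by
  induction n with
  | zero =>
    obtain ⟨C, hC⟩ := hd
    exact fun τ' hτ => ⟨C, fun t ht => by simpa using hC t ⟨ht.1, ht.2.trans hτ.le⟩⟩
  | succ n ih =>
    intro τ' hτ
    obtain ⟨τ₁, h₁, h₂⟩ := exists_between hτ
    have := (h.mono h₂.le).decay_succ hj hq (r := n + 10) (by omega) (ih τ₁ h₂) h₁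
    exact this

open MeasureTheory in
/-- The lemma of du Bois-Reymond. -/
theorem exists_const_of_integral_eq_zero {b : ℝ → ℝ} {T : ℝ} (hT : 0 < T) (hb : Continuous b)
    (h : ∀ ρ : ℝ → ℝ, ContDiff ℝ (⊤ : ℕ∞) ρ → (∀ t ∉ Set.Ioo 0 T, ρ t = 0) →
      ∫ t in (0 : ℝ)..T, ρ t = 0 → ∫ t in (0 : ℝ)..T, ρ t * b t = 0) :
    ∃ c, ∀ t ∈ Set.Ioo 0 T, b t = c := by
  obtain ⟨ρ₀, hρ₀, hρ₀s, hρ₀i⟩ : ∃ ρ : ℝ → ℝ, ContDiff ℝ (⊤ : ℕ∞) ρ ∧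
      (∀ t ∉ Set.Ioo 0 T, ρ t = 0) ∧ ∫ t in (0 : ℝ)..T, ρ t = 1 := by
    obtain ⟨f, hfs, -, hf, hf01, hf1⟩ := exists_contDiff_tsupport_subset (n := ⊤)
      (Ioo_mem_nhds (half_pos hT) (half_lt_self hT))
    have hpos : 0 < ∫ t in (0 : ℝ)..T, f t :=
      intervalIntegral.integral_pos hT hf.continuous.continuousOn
        (fun t _ => (hf01 ⟨t, rfl⟩).1)
        ⟨T / 2, ⟨by linarith, by linarith⟩, by rw [hf1]; exact one_pos⟩
    refine ⟨fun t => (∫ t in (0 : ℝ)..T, f t)⁻¹ * f t, contDiff_const.mul hf, fun t ht => ?_, ?_⟩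
    · simp only [image_eq_zero_of_notMem_tsupport fun h => ht (hfs h), mul_zero]
    · rw [intervalIntegral.integral_const_mul, inv_mul_cancel₀ hpos.ne']
  set c := ∫ t in (0 : ℝ)..T, ρ₀ t * b t with hc
  refine ⟨c, ?_⟩
  have hae : ∀ᵐ t, t ∈ Set.Ioo 0 T → b t - c = 0 := by
    have hli : LocallyIntegrableOn (fun t => b t - c) (Set.Ioo 0 T) :=
      (hb.sub continuous_const).locallyIntegrable.locallyIntegrableOn _
    refine isOpen_Ioo.ae_eq_zero_of_integral_contDiff_smul_eq_zero hli fun g hg _ hgs => ?_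
    have hg0 (t) (ht : t ∉ Set.Ioo 0 T) : g t = 0 :=
      image_eq_zero_of_notMem_tsupport fun h => ht (hgs h)
    rw [← intervalIntegral.integral_eq_integral_of_support_subset (a := 0) (b := T)]
    · have hi (f f' : ℝ → ℝ) (hf : Continuous f) (hf' : Continuous f') :
          IntervalIntegrable (fun t => f t * f' t) volume 0 T := (hf.mul hf').intervalIntegrable _ _
      have hg1 := hg.continuous
      have hρ1 := hρ₀.continuous
      have hi0 (f : ℝ → ℝ) (hf : Continuous f) :
          IntervalIntegrable (fun t => (∫ s in (0 : ℝ)..T, g s) * f t) volume 0 T :=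
        hi _ _ continuous_const hf
      have := h (fun t => g t - (∫ s in (0 : ℝ)..T, g s) * ρ₀ t) (hg.sub (contDiff_const.mul hρ₀))
        (fun t ht => by rw [hg0 t ht, hρ₀s t ht, mul_zero, sub_zero]) (by
          rw [intervalIntegral.integral_sub (hg1.intervalIntegrable _ _)
            (hi0 _ hρ1),
            intervalIntegral.integral_const_mul, hρ₀i, mul_one, sub_self])
      simp only [sub_mul, mul_assoc] at this
      rw [intervalIntegral.integral_sub (hi _ _ hg1 hb)
        (hi0 (fun t => ρ₀ t * b t) (hρ1.mul hb)),
        intervalIntegral.integral_const_mul, ← hc] at this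
      simp only [smul_eq_mul, mul_sub]
      rw [intervalIntegral.integral_sub (hi _ _ hg1 hb) (hi _ _ hg1 continuous_const),
        intervalIntegral.integral_mul_const]
      exact this
    · intro t ht
      refine Set.Ioo_subset_Ioc_self (by_contra fun h => ht ?_)
      simp only [hg0 t h, zero_smul]
  have := Measure.eqOn_open_of_ae_eq (μ := volume) (U := Set.Ioo 0 T) (f := fun t => b t - c)
    (g := fun _ => 0) ((ae_restrict_iff' measurableSet_Ioo).mpr hae) isOpen_Ioo
    (hb.sub continuous_const).continuousOn continuousOn_const
  exact fun t ht => sub_eq_zero.mp (this ht)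

theorem contDiff_integral {ρ : ℝ → ℝ} (hρ : ContDiff ℝ (⊤ : ℕ∞) ρ) :
    ContDiff ℝ (⊤ : ℕ∞) fun t => ∫ s in (0 : ℝ)..t, ρ s := by
  rw [contDiff_infty_iff_deriv]
  have h (t : ℝ) := (hρ.continuous.integral_hasStrictDerivAt 0 t).hasDerivAt
  exact ⟨fun t => (h t).differentiableAt, by rwa [funext fun t => (h t).deriv]⟩

/-- A weak derivative of a continuous function which is continuous is a derivative. -/
theorem hasDerivAt_of_weak {a F : ℝ → ℝ} {T : ℝ} (hT : 0 < T) (ha : ContinuousOn a (Set.Icc 0 T))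
    (hF : ContinuousOn F (Set.Icc 0 T))
    (h : ∀ η : ℝ → ℝ, ContDiff ℝ (⊤ : ℕ∞) η → (∀ t ∉ Set.Ioo 0 T, η t = 0) →
      ∫ t in (0 : ℝ)..T, (deriv η t * a t + η t * F t) = 0) {t : ℝ} (ht : t ∈ Set.Ioo 0 T) :
    HasDerivAt a (F t) t := by
  set a' : ℝ → ℝ := Set.IccExtend hT.le (Set.domRestrict _ a) with ha'
  set F' : ℝ → ℝ := Set.IccExtend hT.le (Set.domRestrict _ F) with hF'
  have ca : Continuous a' := ha.domRestrict.Icc_extend'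
  have cF : Continuous F' := hF.domRestrict.Icc_extend'
  have ea (s) (hs : s ∈ Set.Icc 0 T) : a' s = a s := Set.IccExtend_of_mem _ _ hs
  have eF (s) (hs : s ∈ Set.Icc 0 T) : F' s = F s := Set.IccExtend_of_mem _ _ hs
  have hG (s : ℝ) := (cF.integral_hasStrictDerivAt 0 s).hasDerivAt
  have cG : Continuous fun s => ∫ z in (0 : ℝ)..s, F' z :=
    continuous_iff_continuousAt.mpr fun s => (hG s).continuousAt
  obtain ⟨c, hc⟩ := exists_const_of_integral_eq_zero hT (ca.sub cG) fun ρ hρ hρs hρi => by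
    have hη := contDiff_integral hρ
    have hη' (s : ℝ) := (hρ.continuous.integral_hasStrictDerivAt 0 s).hasDerivAt
    set η : ℝ → ℝ := fun t => ∫ s in (0 : ℝ)..t, ρ s with hηd
    have hη0 (s) (hs : s ∉ Set.Ioo 0 T) : η s = 0 := by
      rw [Set.mem_Ioo, not_and_or, not_lt, not_lt] at hs
      rcases hs with hs | hs
      · refine intervalIntegral.integral_zero_ae (Filter.Eventually.of_forall fun z hz => hρs z ?_)
        rw [Set.uIoc_of_ge hs] at hz
        exact fun h => absurd h.1 (not_lt.mpr hz.2)
      · simp only [hηd]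
        rw [← intervalIntegral.integral_add_adjacent_intervals (b := T)
          (hρ.continuous.intervalIntegrable _ _) (hρ.continuous.intervalIntegrable _ _), hρi,
          zero_add]
        refine intervalIntegral.integral_zero_ae (Filter.Eventually.of_forall fun z hz => hρs z ?_)
        rw [Set.uIoc_of_le hs] at hz
        exact fun h => absurd h.2 (not_lt.mpr hz.1.le)
    have h1 : ∫ t in (0 : ℝ)..T, (ρ t * a' t + η t * F' t) = 0 := by
      refine Eq.trans (intervalIntegral.integral_congr fun s hs => ?_) (h η hη hη0)
      rw [Set.uIcc_of_le hT.le] at hs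
      simp only [(hη' s).deriv, ea s hs, eF s hs]
    have h2 := intervalIntegral.integral_deriv_mul_eq_sub (a := 0) (b := T)
      (fun s _ => hη' s) (fun s _ => hG s) (hρ.continuous.intervalIntegrable _ _)
      (cF.intervalIntegrable _ _)
    rw [hη0 T (by simp), hη0 0 (by simp), zero_mul, zero_mul, sub_zero] at h2
    refine Eq.trans ?_ (sub_eq_zero.mpr (h1.trans h2.symm))
    rw [← intervalIntegral.integral_sub]
    · refine intervalIntegral.integral_congr fun s _ => ?_
      simp only [Pi.sub_apply]
      ring
    · exact ((hρ.continuous.mul ca).add (hη.continuous.mul cF)).intervalIntegrable _ _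
    · exact ((hρ.continuous.mul cG).add (hη.continuous.mul cF)).intervalIntegrable _ _
  have hd := (hG t).const_add c
  rw [eF t (Set.Ioo_subset_Icc_self ht)] at hd
  refine hd.congr_of_eventuallyEq ?_
  filter_upwards [Ioo_mem_nhds ht.1 ht.2] with s hs
  have := hc s hs
  simp only [Pi.sub_apply, ea s (Set.Ioo_subset_Icc_self hs)] at this
  linarith

open Polynomial in
theorem exists_le_abs_eval_atTop (R : ℝ[X]) {n : ℕ} (hR : R.coeff n ≠ 0) :
    ∃ c > 0, ∃ K : ℝ, ∀ x, K ≤ x → c * |x| ^ n ≤ |R.eval x| := by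
  have h := Polynomial.isBigO_atTop_of_degree_le (X ^ n : ℝ[X]) R
    (by rw [degree_X_pow]; exact le_degree_of_ne_zero hR)
  obtain ⟨C, hC, hb⟩ := h.exists_pos
  obtain ⟨K, hK⟩ := Filter.eventually_atTop.mp hb.bound
  refine ⟨C⁻¹, inv_pos.mpr hC, K, fun x hx => ?_⟩
  have := hK x hx
  rw [eval_pow, eval_X, Real.norm_eq_abs, Real.norm_eq_abs, abs_pow] at this
  rwa [inv_mul_le_iff₀ hC]

open Polynomial in
theorem exists_le_abs_eval (R : ℝ[X]) {n : ℕ} (hR : R.coeff n ≠ 0) :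
    ∃ c > 0, ∃ K : ℝ, ∀ x : ℝ, K ≤ |x| → c * |x| ^ n ≤ |R.eval x| := by
  obtain ⟨c₁, hc₁, K₁, h₁⟩ := exists_le_abs_eval_atTop R hR
  have hR' : (R.comp (C (-1) * X)).coeff n ≠ 0 := by
    rw [comp_C_mul_X_coeff]
    exact mul_ne_zero hR (pow_ne_zero _ (by norm_num))
  obtain ⟨c₂, hc₂, K₂, h₂⟩ := exists_le_abs_eval_atTop _ hR'
  refine ⟨min c₁ c₂, lt_min hc₁ hc₂, max K₁ K₂, fun x hx => ?_⟩
  rcases abs_cases x with ⟨hx', -⟩ | ⟨hx', -⟩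
  · refine le_trans ?_ (h₁ x (by rw [← hx']; exact (le_max_left _ _).trans hx))
    gcongr
    exact min_le_left _ _
  · have := h₂ (-x) (by rw [← hx']; exact (le_max_right _ _).trans hx)
    rw [eval_comp, eval_mul, eval_C, eval_X, neg_one_mul, neg_neg, abs_neg] at this
    refine le_trans ?_ this
    gcongr
    exact min_le_right _ _

/-- The dispersion relation of `Σ γ_i ∂_x^{2(j-i)+1}`. -/
noncomputable def dispersionRelation (jj : ℕ) (γ : ℕ → ℝ) (k : ℤ) : ℝ :=
  ∑ i ∈ Finset.range (jj + 1), γ i * (-1) ^ (jj - i) * (k : ℝ) ^ (2 * (jj - i) + 1)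

open Polynomial in
theorem dispersive_dispersionRelation {jj : ℕ} {γ : ℕ → ℝ} (hγ : γ 0 ≠ 0) :
    Dispersive jj (dispersionRelation jj γ) := by
  set Q : ℝ[X] := ∑ i ∈ Finset.range (jj + 1), C (γ i * (-1) ^ (jj - i)) * X ^ (2 * (jj - i) + 1)
    with hQ
  have hq (k : ℤ) : dispersionRelation jj γ k = Q.eval (k : ℝ) := by
    simp [dispersionRelation, hQ, eval_finsetSum]
  have hcoef : Q.derivative.coeff (2 * jj) ≠ 0 := by
    have : Q.coeff (2 * jj + 1) = γ 0 * (-1) ^ jj := by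
      rw [hQ, finsetSum_coeff, Finset.sum_eq_single 0]
      · rw [coeff_C_mul, coeff_X_pow, if_pos (by omega), mul_one, Nat.sub_zero]
      · intro i hi hi0
        rw [coeff_C_mul, coeff_X_pow, if_neg (by have := Finset.mem_range.mp hi; omega), mul_zero]
      · simp
    rw [coeff_derivative, this]
    exact mul_ne_zero (mul_ne_zero hγ (pow_ne_zero _ (by norm_num))) (by positivity)
  constructor
  · obtain ⟨c, hc, K, h⟩ := exists_le_abs_eval _ hcoef
    refine ⟨c / 2 ^ (2 * jj), by positivity, 2 * K, fun k m hk hm hmk => ?_⟩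
    have hm1 : (1 : ℝ) ≤ |(m : ℝ)| := by exact_mod_cast Int.one_le_abs hm
    have key (x y : ℝ) (hxy : x < y) :
        ∃ ξ ∈ Set.Ioo x y, Q.eval y - Q.eval x = Q.derivative.eval ξ * (y - x) := by
      obtain ⟨ξ, hξ, h⟩ := exists_deriv_eq_slope (fun x => Q.eval x) hxy Q.continuous.continuousOn
        Q.differentiable.differentiableOn
      refine ⟨ξ, hξ, ?_⟩
      rw [Polynomial.deriv] at h
      rw [h, div_mul_cancel₀ _ (sub_pos.mpr hxy).ne']
    obtain ⟨ξ, hξ, hd⟩ : ∃ ξ : ℝ, |(k : ℝ)| ≤ 2 * |ξ| ∧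
        Q.eval (k : ℝ) - Q.eval ((k : ℝ) - m) = Q.derivative.eval ξ * m := by
      rcases lt_or_gt_of_ne (Int.cast_ne_zero (α := ℝ).mpr hm) with hm' | hm'
      · obtain ⟨ξ, hξ, e⟩ := key k (k - m) (by linarith)
        refine ⟨ξ, ?_, by linear_combination -e⟩
        rw [abs_of_neg hm'] at hmk
        rcases abs_cases (k : ℝ) with ⟨h1, h1'⟩ | ⟨h1, h1'⟩ <;>
        rcases abs_cases ξ with ⟨h2, h2'⟩ | ⟨h2, h2'⟩ <;> linarith [hξ.1, hξ.2]
      · obtain ⟨ξ, hξ, e⟩ := key (k - m) k (by linarith)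
        refine ⟨ξ, ?_, by linear_combination e⟩
        rw [abs_of_pos hm'] at hmk
        rcases abs_cases (k : ℝ) with ⟨h1, h1'⟩ | ⟨h1, h1'⟩ <;>
        rcases abs_cases ξ with ⟨h2, h2'⟩ | ⟨h2, h2'⟩ <;> linarith [hξ.1, hξ.2]
    rw [hq, hq, Int.cast_sub, hd, abs_mul]
    refine le_trans ?_ (le_mul_of_one_le_right (abs_nonneg _) hm1)
    refine le_trans ?_ (h ξ (by linarith))
    rw [div_mul_eq_mul_div, div_le_iff₀ (by positivity), mul_assoc, ← mul_pow, mul_comm |ξ|]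
    gcongr
  · refine ⟨∑ i ∈ Finset.range (jj + 1), |γ i|, fun k => ?_⟩
    rw [dispersionRelation, Finset.sum_mul]
    refine (Finset.abs_sum_le_sum_abs _ _).trans (Finset.sum_le_sum fun i hi => ?_)
    rw [abs_mul, abs_mul, abs_pow, abs_neg, abs_one, one_pow, mul_one, abs_pow]
    gcongr ?_ * ?_
    refine (pow_le_pow_left₀ (abs_nonneg _) (le_add_of_nonneg_left zero_le_one) _).trans ?_
    exact pow_le_pow_right₀ (le_add_of_nonneg_right (abs_nonneg _)) (by omega)

open Classical in
/-- A continuous `2π`-periodic function as a function on the circle. -/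
noncomputable def toCircle (f : ℝ → ℝ) : CircleFun :=
  if h : Continuous f ∧ Function.Periodic f (2 * Real.pi) then
    ⟨fun x => (h.2.lift x : ℂ), Complex.continuous_ofReal.comp (continuous_coinduced_dom.mpr h.1)⟩
  else 0

section

variable {f g : ℝ → ℝ}

theorem toCircle_coe (hf : Continuous f) (hp : Function.Periodic f (2 * Real.pi)) (x : ℝ) :
    toCircle f (x : AddCircle (2 * Real.pi)) = f x := by
  rw [toCircle, dif_pos ⟨hf, hp⟩]
  rfl

theorem coef_toCircle (hf : Continuous f) (hp : Function.Periodic f (2 * Real.pi)) (k : ℤ) :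
    coef k (toCircle f) = fc f k := by
  rw [coef_apply, fourierCoeff_eq_intervalIntegral _ k 0, fc, zero_add, Complex.real_smul]
  congr 1
  · simp
  · refine intervalIntegral.integral_congr fun x _ => ?_
    rw [toCircle_coe hf hp, fourier_coe_apply, smul_eq_mul, mul_comm]
    congr 2
    have : (Real.pi : ℂ) ≠ 0 := Complex.ofReal_ne_zero.mpr Real.pi_ne_zero
    push_cast
    field_simp

theorem star_toCircle (f : ℝ → ℝ) : star (toCircle f) = toCircle f := by
  rw [toCircle]
  split_ifs with h
  · ext x
    exact Complex.conj_ofReal _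
  · exact star_zero _

theorem toCircle_eval {σ : Type*} {f : σ → ℝ → ℝ} (hf : ∀ l, Continuous (f l))
    (hp : ∀ l, Function.Periodic (f l) (2 * Real.pi)) (P : MvPolynomial σ ℝ) :
    MvPolynomial.aeval (fun l => toCircle (f l)) P =
      toCircle fun x => MvPolynomial.eval (fun l => f l x) P := by
  ext x
  induction x using QuotientAddGroup.induction_on with
  | H x =>
    have hc : Continuous fun x => MvPolynomial.eval (fun l => f l x) P :=
      (MvPolynomial.continuous_eval P).comp (continuous_pi hf)
    have hper : Function.Periodic (fun x => MvPolynomial.eval (fun l => f l x) P) (2 * Real.pi) :=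
      fun x => by simp only [hp _ x]
    rw [toCircle_coe hc hper]
    clear hc hper
    induction P using MvPolynomial.induction_on with
    | C c => simp
    | add p q hp hq => simp [hp, hq]
    | mul_X p i h => simp [h, toCircle_coe (hf i) (hp i)]

theorem fc_sub (hf : Continuous f) (hg : Continuous g) (k : ℤ) :
    fc (fun x => f x - g x) k = fc f k - fc g k := by
  rw [fc, fc, fc, ← mul_sub, ← intervalIntegral.integral_sub]
  · simp only [Complex.ofReal_sub, sub_mul]
  · exact Continuous.intervalIntegrable (by fun_prop) _ _
  · exact Continuous.intervalIntegrable (by fun_prop) _ _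

theorem _root_.Function.Periodic.deriv_real {c : ℝ} (hp : Function.Periodic f c) :
    Function.Periodic (deriv f) c := fun x => by
  rw [← deriv_comp_add_const, funext hp]

theorem _root_.Function.Periodic.iteratedDeriv_real {c : ℝ} (hp : Function.Periodic f c) (l : ℕ) :
    Function.Periodic (iteratedDeriv l f) c := by
  induction l with
  | zero => rwa [iteratedDeriv_zero]
  | succ l ih => rw [iteratedDeriv_succ]; exact ih.deriv_real

theorem fc_deriv (hf : ContDiff ℝ 1 f) (hp : Function.Periodic f (2 * Real.pi)) (k : ℤ) :
    fc (deriv f) k = Complex.I * k * fc f k := by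
  have hd (x : ℝ) : HasDerivAt (fun x => (f x : ℂ)) ((deriv f x : ℝ) : ℂ) x :=
    (hf.differentiable one_ne_zero x).hasDerivAt.ofReal_comp
  have he (x : ℝ) : HasDerivAt (fun x : ℝ => Complex.exp (-Complex.I * (k : ℂ) * (x : ℂ)))
      (Complex.exp (-Complex.I * (k : ℂ) * (x : ℂ)) * (-Complex.I * k)) x := by
    simpa using (((hasDerivAt_id (x : ℂ)).const_mul (-Complex.I * (k : ℂ))).cexp).comp_ofReal
  have hc : Continuous (deriv f) := hf.continuous_deriv le_rfl
  have hc' := hf.continuous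
  have h := intervalIntegral.integral_deriv_mul_eq_sub (a := 0) (b := 2 * Real.pi)
    (fun x _ => hd x) (fun x _ => he x)
    (Continuous.intervalIntegrable (by fun_prop) _ _)
    (Continuous.intervalIntegrable (by fun_prop) _ _)
  have e1 : Complex.exp (-Complex.I * (k : ℂ) * ((2 * Real.pi : ℝ) : ℂ)) = 1 :=
    Complex.exp_eq_one_iff.mpr ⟨-k, by push_cast; ring⟩
  have e2 : f (2 * Real.pi) = f 0 := by simpa using hp 0
  rw [e1, e2, Complex.ofReal_zero, mul_zero, Complex.exp_zero, sub_self,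
    intervalIntegral.integral_add (Continuous.intervalIntegrable (by fun_prop) _ _)
      (Continuous.intervalIntegrable (by fun_prop) _ _)] at h
  simp only [← mul_assoc] at h
  rw [intervalIntegral.integral_mul_const, intervalIntegral.integral_mul_const] at h
  rw [fc, fc]
  linear_combination (Complex.ofReal (2 * Real.pi))⁻¹ * h

theorem fc_iteratedDeriv {l : ℕ} (hf : ContDiff ℝ l f) (hp : Function.Periodic f (2 * Real.pi))
    (k : ℤ) : fc (iteratedDeriv l f) k = (Complex.I * k) ^ l * fc f k := by
  induction l with
  | zero => simp
  | succ l ih =>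
    rw [iteratedDeriv_succ, fc_deriv _ (hp.iteratedDeriv_real l), ih (hf.of_le (by simp)), pow_succ']
    · ring
    · rw [iteratedDeriv_eq_iterate]
      exact ContDiff.iterate_deriv' 1 l (by rwa [add_comm])

theorem MemHs.sub {s : ℕ} (hf : MemHs s f) (hg : MemHs s g) : MemHs s fun x => f x - g x := by
  refine ⟨hf.1.sub hg.1, hf.2.1.sub hg.2.1, ?_⟩
  refine Summable.of_nonneg_of_le (fun k => by positivity) (fun k => ?_)
    ((hf.2.2.add hg.2.2).mul_left 2)
  rw [fc_sub hf.1 hg.1, ← mul_add, mul_left_comm]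
  gcongr
  nlinarith [norm_sub_le (fc f k) (fc g k), norm_nonneg (fc f k - fc g k),
    sq_nonneg (‖fc f k‖ - ‖fc g k‖), norm_nonneg (fc f k), norm_nonneg (fc g k)]

theorem MemHs.norm_fc_le {s : ℕ} (hf : MemHs s f) (k : ℤ) :
    (1 + |(k : ℝ)|) ^ s * ‖fc f k‖ ≤ 2 ^ s * hsNorm s f := by
  have h1 := hf.2.2.le_tsum k fun _ _ => by positivity
  refine abs_le_of_sq_le_sq' ?_ (by rw [hsNorm]; positivity) |>.2
  rw [mul_pow (2 ^ s), hsNorm, Real.sq_sqrt (tsum_nonneg fun _ => by positivity)]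
  refine le_trans ?_ (mul_le_mul_of_nonneg_left h1 (by positivity))
  rw [mul_pow, ← mul_assoc, ← pow_mul, ← pow_mul, mul_comm s 2, pow_mul, pow_mul, ← mul_pow]
  gcongr
  nlinarith [sq_abs (k : ℝ), sq_nonneg (|(k : ℝ)| - 1), sq_nonneg (k : ℝ)]

end

/-- The first four derivatives of a periodic function, on the circle. -/
noncomputable def jet (f : ℝ → ℝ) (l : Fin 4) : CircleFun := toCircle (iteratedDeriv l f)

open MvPolynomial in
/-- The nonlinearity as a polynomial in the derivatives `X 0, …, X 3`. -/
noncomputable def nonlinearity {j0 : ℕ} (lam : Fin j0 → ℝ) (a b c d : Fin j0 → ℕ) :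
    MvPolynomial (Fin 4) ℝ :=
  ∑ j, C (lam j) * X 3 ^ a j * X 2 ^ b j * X 1 ^ c j * X 0 ^ d j

section

variable {f g : ℝ → ℝ} {j0 : ℕ} {lam : Fin j0 → ℝ} {a b c d : Fin j0 → ℕ}

theorem eval_nonlinearity (f : ℝ → ℝ) (x : ℝ) :
    MvPolynomial.eval (fun l : Fin 4 => iteratedDeriv l f x) (nonlinearity lam a b c d) =
      Nfun j0 lam a b c d f x := by
  simp [nonlinearity, Nfun, iteratedDeriv_one, iteratedDeriv_zero]

theorem eval_pderiv_nonlinearity (f : ℝ → ℝ) (x : ℝ) :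
    MvPolynomial.eval (fun l : Fin 4 => iteratedDeriv l f x)
      (MvPolynomial.pderiv 2 (nonlinearity lam a b c d)) =
      ∑ j, lam j * b j * ((iteratedDeriv 3 f x) ^ a j * (iteratedDeriv 2 f x) ^ (b j - 1) *
        (deriv f x) ^ c j * (f x) ^ d j) := by
  simp only [nonlinearity, map_sum]
  refine Finset.sum_congr rfl fun j _ => ?_
  simp [Derivation.leibniz, MvPolynomial.pderiv_X, Derivation.leibniz_pow, iteratedDeriv_one,
    iteratedDeriv_zero]
  ring

theorem continuous_iteratedDeriv_fin (hf : ContDiff ℝ 3 f) (l : Fin 4) :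
    Continuous (iteratedDeriv l f) :=
  hf.continuous_iteratedDeriv l (by exact_mod_cast Nat.le_of_lt_succ l.2)

theorem coef_jet (hf : ContDiff ℝ 3 f) (hp : Function.Periodic f (2 * Real.pi)) (l : Fin 4)
    (k : ℤ) : coef k (jet f l) = (Complex.I * k) ^ (l : ℕ) * fc f k := by
  rw [jet, coef_toCircle (continuous_iteratedDeriv_fin hf l) (hp.iteratedDeriv_real l),
    fc_iteratedDeriv (hf.of_le (by exact_mod_cast Nat.le_of_lt_succ l.2)) hp]

theorem aeval_jet (hf : ContDiff ℝ 3 f) (hp : Function.Periodic f (2 * Real.pi))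
    (P : MvPolynomial (Fin 4) ℝ) : MvPolynomial.aeval (jet f) P =
      toCircle fun x => MvPolynomial.eval (fun l : Fin 4 => iteratedDeriv l f x) P :=
  toCircle_eval (f := fun l : Fin 4 => iteratedDeriv l f) (continuous_iteratedDeriv_fin hf)
    (fun l => hp.iteratedDeriv_real l) P

theorem coef_aeval_jet (hf : ContDiff ℝ 3 f) (hp : Function.Periodic f (2 * Real.pi))
    (P : MvPolynomial (Fin 4) ℝ) (k : ℤ) : coef k (MvPolynomial.aeval (jet f) P) =
      fc (fun x => MvPolynomial.eval (fun l : Fin 4 => iteratedDeriv l f x) P) k := by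
  rw [aeval_jet hf hp, coef_toCircle]
  · exact (MvPolynomial.continuous_eval P).comp (continuous_pi (continuous_iteratedDeriv_fin hf))
  · exact fun x => by simp only [(hp.iteratedDeriv_real _) x]

theorem coef_pderiv_nonlinearity (hf : ContDiff ℝ 3 f) (hp : Function.Periodic f (2 * Real.pi)) :
    (coef 0 (MvPolynomial.aeval (jet f)
      (MvPolynomial.pderiv 2 (nonlinearity lam a b c d)))).re = PN j0 lam a b c d f := by
  have h0 : Continuous f := hf.continuous
  have h1 : Continuous (deriv f) := hf.continuous_deriv (by norm_num)
  have h2 := continuous_iteratedDeriv_fin hf 2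
  have h3 := continuous_iteratedDeriv_fin hf 3
  simp only [Fin.isValue, Fin.coe_ofNat_eq_mod] at h2 h3
  rw [coef_aeval_jet hf hp, PN]
  simp only [eval_pderiv_nonlinearity]
  rw [fc]
  simp only [Int.cast_zero, mul_zero, zero_mul, Complex.exp_zero, mul_one]
  rw [intervalIntegral.integral_ofReal, ← Complex.ofReal_inv, ← Complex.ofReal_mul,
    Complex.ofReal_re, intervalIntegral.integral_finsetSum, Finset.mul_sum]
  · refine Finset.sum_congr rfl fun j _ => ?_
    rw [intervalIntegral.integral_const_mul]
    ring
  · exact fun j _ => Continuous.intervalIntegrable (by fun_prop) _ _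

theorem norm_jet_sub_le (hf : ContDiff ℝ 3 f) (hg : ContDiff ℝ 3 g) (hf' : MemHs 13 f)
    (hg' : MemHs 13 g) (l : Fin 4) :
    ‖jet f l - jet g l‖ ≤ 2 ^ 13 * weightSum * hsNorm 13 fun x => f x - g x := by
  have h : Tame 2 _ _ (jet f l - jet g l) := Tame.of_bound le_rfl
    (A := 2 ^ 13 * hsNorm 13 fun x => f x - g x) fun k => by
      refine le_trans ?_ ((hf'.sub hg').norm_fc_le k)
      rw [map_sub, coef_jet hf hf'.2.1, coef_jet hg hg'.2.1, ← mul_sub, ← fc_sub hf'.1 hg'.1,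
        norm_mul, ← mul_assoc]
      refine mul_le_mul_of_nonneg_right ?_ (norm_nonneg _)
      have := norm_I_mul_pow_le (le_add_of_nonneg_right (abs_nonneg (k : ℝ)))
        (le_add_of_nonneg_left zero_le_one) l
      refine (mul_le_mul_of_nonneg_left this (by positivity)).trans ?_
      rw [← pow_add]
      exact pow_le_pow_right₀ (le_add_of_nonneg_right (abs_nonneg _)) (by norm_num)
  refine (norm_le_tsum_coef h.summable).trans (h.tsum_le.trans (le_of_eq (by ring)))

end

section

variable {f : ℝ → ℝ} {jj j0 : ℕ} {γ : ℕ → ℝ} {lam : Fin j0 → ℝ} {a b c d : Fin j0 → ℕ} {T : ℝ}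
  {u : ℝ → ℝ → ℝ}

theorem fc_eq_cos_sin (hf : Continuous f) (k : ℤ) :
    fc f k = ((2 * Real.pi)⁻¹ * ∫ x in (0 : ℝ)..(2 * Real.pi), f x * Real.cos (k * x) : ℝ) -
      Complex.I * ((2 * Real.pi)⁻¹ * ∫ x in (0 : ℝ)..(2 * Real.pi), f x * Real.sin (k * x) : ℝ) := by
  have h (x : ℝ) : (f x : ℂ) * Complex.exp (-Complex.I * k * x) =
      ((f x * Real.cos (k * x) : ℝ) : ℂ) - Complex.I * ((f x * Real.sin (k * x) : ℝ) : ℂ) := by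
    rw [show -Complex.I * k * x = ((-(k * x) : ℝ) : ℂ) * Complex.I by push_cast; ring,
      Complex.exp_mul_I, ← Complex.ofReal_cos, ← Complex.ofReal_sin, Real.cos_neg, Real.sin_neg]
    push_cast
    ring
  simp only [fc, h]
  rw [intervalIntegral.integral_sub (Continuous.intervalIntegrable (by fun_prop) _ _)
    (Continuous.intervalIntegrable (by fun_prop) _ _), intervalIntegral.integral_const_mul,
    intervalIntegral.integral_ofReal, intervalIntegral.integral_ofReal]
  push_cast
  ring

theorem continuous_Nfun (hf : ContDiff ℝ 3 f) : Continuous (Nfun j0 lam a b c d f) := by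
  simp only [← funext (eval_nonlinearity (lam := lam) (a := a) (b := b) (c := c) (d := d) f)]
  exact (MvPolynomial.continuous_eval _).comp (continuous_pi (continuous_iteratedDeriv_fin hf))

/-- The equation tested against `η t * χ x`. -/
theorem IsSolutionH.integral_mode (hu : IsSolutionH jj γ j0 lam a b c d 0 T u) (hT : 0 < T)
    {χ χL η : ℝ → ℝ} (hχ : ContDiff ℝ (⊤ : ℕ∞) χ) (hχp : Function.Periodic χ (2 * Real.pi))
    (hχL : Continuous χL)
    (hL : ∀ x, ∑ i ∈ Finset.range (jj + 1), γ i * iteratedDeriv (2 * (jj - i) + 1) χ x = χL x)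
    (hη : ContDiff ℝ (⊤ : ℕ∞) η) (hη0 : ∀ t ∉ Set.Ioo 0 T, η t = 0) :
    ∫ t in (0 : ℝ)..T, (deriv η t * (∫ x in (0 : ℝ)..(2 * Real.pi), u t x * χ x) +
      η t * ((∫ x in (0 : ℝ)..(2 * Real.pi), u t x * χL x) +
        ∫ x in (0 : ℝ)..(2 * Real.pi), Nfun j0 lam a b c d (u t) x * χ x)) = 0 := by
  refine Eq.trans (intervalIntegral.integral_congr fun t ht => ?_)
    (hu.2 (fun t x => η t * χ x) ((hη.comp contDiff_fst).mul (hχ.comp contDiff_snd))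
      (fun t x => by simp only [hχp x]) fun t ht x => by rw [hη0 t ht, zero_mul])
  rw [Set.uIcc_of_le hT.le] at ht
  have hc := (hu.1 t ht).1
  have hc' := hc.continuous
  have hN : Continuous (Nfun j0 lam a b c d (u t)) := continuous_Nfun hc
  have hχc := hχ.continuous
  have hd (x : ℝ) : deriv (fun τ => η τ * χ x) t = deriv η t * χ x :=
    deriv_mul_const (hη.differentiable (by simp) t) _
  have hs (x : ℝ) : ∑ i ∈ Finset.range (jj + 1),
      γ i * iteratedDeriv (2 * (jj - i) + 1) (fun x => η t * χ x) x = η t * χL x := by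
    rw [← hL, Finset.mul_sum]
    refine Finset.sum_congr rfl fun i _ => ?_
    rw [iteratedDeriv_const_mul_field, mul_left_comm]
  simp only [hd, hs]
  rw [← intervalIntegral.integral_const_mul, ← intervalIntegral.integral_add
    (Continuous.intervalIntegrable (by fun_prop) _ _)
    (Continuous.intervalIntegrable (by fun_prop) _ _), ← intervalIntegral.integral_const_mul,
    ← intervalIntegral.integral_add (Continuous.intervalIntegrable (by fun_prop) _ _)
    (Continuous.intervalIntegrable (by fun_prop) _ _)]
  refine intervalIntegral.integral_congr fun x _ => ?_
  ring

theorem sum_iteratedDeriv_cos (jj : ℕ) (γ : ℕ → ℝ) (k : ℤ) (x : ℝ) :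
    ∑ i ∈ Finset.range (jj + 1),
      γ i * iteratedDeriv (2 * (jj - i) + 1) (fun x => Real.cos (k * x)) x =
      -dispersionRelation jj γ k * Real.sin (k * x) := by
  rw [dispersionRelation, ← Finset.sum_neg_distrib, Finset.sum_mul]
  refine Finset.sum_congr rfl fun i _ => ?_
  rw [iteratedDeriv_comp_const_mul Real.contDiff_cos, Real.iteratedDeriv_odd_cos]
  simp only [Pi.mul_apply, Pi.pow_apply, Pi.neg_apply, Pi.one_apply]
  ring

theorem sum_iteratedDeriv_sin (jj : ℕ) (γ : ℕ → ℝ) (k : ℤ) (x : ℝ) :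
    ∑ i ∈ Finset.range (jj + 1),
      γ i * iteratedDeriv (2 * (jj - i) + 1) (fun x => Real.sin (k * x)) x =
      dispersionRelation jj γ k * Real.cos (k * x) := by
  rw [dispersionRelation, Finset.sum_mul]
  refine Finset.sum_congr rfl fun i _ => ?_
  rw [iteratedDeriv_comp_const_mul Real.contDiff_sin, Real.iteratedDeriv_odd_sin]
  simp only [Pi.mul_apply, Pi.pow_apply, Pi.neg_apply, Pi.one_apply]
  ring

theorem continuousOn_jet (hu : IsSolutionH jj γ j0 lam a b c d 0 T u)
    (hm : ∀ t ∈ Set.Icc (0 : ℝ) T, MemHs 13 (u t)) (hc : ContInHs 13 (Set.Icc (0 : ℝ) T) u) :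
    ContinuousOn (fun t => jet (u t)) (Set.Icc 0 T) := by
  refine continuousOn_pi.mpr fun l => Metric.continuousOn_iff.mpr fun s hs ε hε => ?_
  have hS := weightSum_nonneg
  obtain ⟨δ, hδ, h⟩ := hc s hs (ε / (2 ^ 13 * weightSum + 1)) (by positivity)
  refine ⟨δ, hδ, fun t ht hts => ?_⟩
  rw [dist_eq_norm]
  refine (norm_jet_sub_le (hu.1 t ht).1 (hu.1 s hs).1 (hm t ht) (hm s hs) l).trans_lt ?_
  have h1 := h t ht (by rwa [← Real.dist_eq])
  rw [lt_div_iff₀ (by positivity)] at h1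
  have h2 : 0 ≤ hsNorm 13 fun x => u t x - u s x := Real.sqrt_nonneg _
  linarith

theorem continuousOn_fc (hu : IsSolutionH jj γ j0 lam a b c d 0 T u)
    (hm : ∀ t ∈ Set.Icc (0 : ℝ) T, MemHs 13 (u t)) (hc : ContInHs 13 (Set.Icc (0 : ℝ) T) u)
    (k : ℤ) : ContinuousOn (fun t => fc (u t) k) (Set.Icc 0 T) := by
  refine ((coef k).continuous.comp_continuousOn
    (continuousOn_pi.mp (continuousOn_jet hu hm hc) 0)).congr fun s hs => ?_
  simp [coef_jet (hu.1 s hs).1 (hu.1 s hs).2]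

theorem hasDerivAt_fc (hT : 0 < T) (hu : IsSolutionH jj γ j0 lam a b c d 0 T u)
    (hm : ∀ t ∈ Set.Icc (0 : ℝ) T, MemHs 13 (u t)) (hc : ContInHs 13 (Set.Icc (0 : ℝ) T) u)
    {t : ℝ} (ht : t ∈ Set.Ioo 0 T) (k : ℤ) :
    HasDerivAt (fun t => fc (u t) k) (-Complex.I * dispersionRelation jj γ k * fc (u t) k +
      coef k (MvPolynomial.aeval (jet (u t)) (nonlinearity lam a b c d))) t := by
  have hj := continuousOn_jet hu hm hc
  set n : ℝ → ℂ := fun t =>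
    coef k (MvPolynomial.aeval (jet (u t)) (nonlinearity lam a b c d)) with hn
  set q := dispersionRelation jj γ k with hq
  have cw := continuousOn_fc hu hm hc k
  have cn : ContinuousOn n (Set.Icc 0 T) :=
    ((coef k).continuous.comp (continuous_aeval _)).comp_continuousOn hj
  have en (s) (hs : s ∈ Set.Icc 0 T) : n s = fc (Nfun j0 lam a b c d (u s)) k := by
    simp only [hn, coef_aeval_jet (hu.1 s hs).1 (hu.1 s hs).2, eval_nonlinearity]
  have hper (x : ℝ) : (k : ℝ) * (x + 2 * Real.pi) = k * x + k * (2 * Real.pi) := by ring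
  have hre : HasDerivAt (fun t => (fc (u t) k).re) (q * (fc (u t) k).im + (n t).re) t := by
    refine hasDerivAt_of_weak (F := fun t => q * (fc (u t) k).im + (n t).re) hT
      (Complex.continuous_re.comp_continuousOn cw)
      ((continuousOn_const.mul (Complex.continuous_im.comp_continuousOn cw)).add
        (Complex.continuous_re.comp_continuousOn cn)) (fun η hη hη0 => ?_) ht
    have h := hu.integral_mode hT (χ := fun x => Real.cos (k * x)) (η := η)
      (Real.contDiff_cos.comp (contDiff_const.mul contDiff_id))
      (fun x => by simp only [hper, Real.cos_add_int_mul_two_pi]) (by fun_prop)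
      (sum_iteratedDeriv_cos jj γ k) hη hη0
    refine Eq.trans ?_ ((congrArg (fun r => (2 * Real.pi)⁻¹ * r) h).trans (mul_zero _))
    rw [← intervalIntegral.integral_const_mul]
    refine intervalIntegral.integral_congr fun s hs => ?_
    rw [Set.uIcc_of_le hT.le] at hs
    simp only [Function.comp_apply, en s hs, fc_eq_cos_sin (hu.1 s hs).1.continuous,
      fc_eq_cos_sin (continuous_Nfun (hu.1 s hs).1), mul_left_comm _ (-dispersionRelation jj γ k),
      intervalIntegral.integral_const_mul, Complex.sub_re, Complex.sub_im, Complex.ofReal_re,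
      Complex.ofReal_im, Complex.I_mul_re, Complex.I_mul_im, hq]
    ring
  have him : HasDerivAt (fun t => (fc (u t) k).im) (-q * (fc (u t) k).re + (n t).im) t := by
    refine hasDerivAt_of_weak (F := fun t => -q * (fc (u t) k).re + (n t).im) hT
      (Complex.continuous_im.comp_continuousOn cw)
      ((continuousOn_const.mul (Complex.continuous_re.comp_continuousOn cw)).add
        (Complex.continuous_im.comp_continuousOn cn)) (fun η hη hη0 => ?_) ht
    have h := hu.integral_mode hT (χ := fun x => Real.sin (k * x)) (η := η)
      (Real.contDiff_sin.comp (contDiff_const.mul contDiff_id))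
      (fun x => by simp only [hper, Real.sin_add_int_mul_two_pi]) (by fun_prop)
      (sum_iteratedDeriv_sin jj γ k) hη hη0
    refine Eq.trans ?_ ((congrArg (fun r => -(2 * Real.pi)⁻¹ * r) h).trans (mul_zero _))
    rw [← intervalIntegral.integral_const_mul]
    refine intervalIntegral.integral_congr fun s hs => ?_
    rw [Set.uIcc_of_le hT.le] at hs
    simp only [Function.comp_apply, en s hs, fc_eq_cos_sin (hu.1 s hs).1.continuous,
      fc_eq_cos_sin (continuous_Nfun (hu.1 s hs).1), mul_left_comm _ (dispersionRelation jj γ k),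
      intervalIntegral.integral_const_mul, Complex.sub_re, Complex.sub_im, Complex.ofReal_re,
      Complex.ofReal_im, Complex.I_mul_re, Complex.I_mul_im, hq]
    ring
  have h := hre.ofReal_comp.add (him.ofReal_comp.mul_const Complex.I)
  have e (z : ℝ → ℂ) : (fun s => ((z s).re : ℂ)) + (fun s => ((z s).im : ℂ) * Complex.I) = z :=
    funext fun s => Complex.re_add_im (z s)
  rw [e fun s => fc (u s) k] at h
  refine h.congr_deriv (Complex.ext ?_ ?_) <;> simp [hn]

end

section

variable {f : ℝ → ℝ} {jj j0 : ℕ} {γ : ℕ → ℝ} {lam : Fin j0 → ℝ} {a b c d : Fin j0 → ℕ} {T : ℝ}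
  {u : ℝ → ℝ → ℝ}

theorem exists_decay (hT : 0 < T) (hm : ∀ t ∈ Set.Icc (0 : ℝ) T, MemHs 13 (u t))
    (hc : ContInHs 13 (Set.Icc (0 : ℝ) T) u) :
    ∃ δ > 0, ∀ τ ≤ T, τ < δ → Decay 13 (fun k t => fc (u t) k) τ := by
  have h0 : (0 : ℝ) ∈ Set.Icc 0 T := ⟨le_rfl, hT.le⟩
  obtain ⟨δ, hδ, h⟩ := hc 0 h0 1 one_pos
  refine ⟨δ, hδ, fun τ hτ hτδ => ⟨2 ^ 13 * 1 + 2 ^ 13 * hsNorm 13 (u 0), fun t ht k => ?_⟩⟩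
  have htT : t ∈ Set.Icc 0 T := ⟨ht.1, ht.2.trans hτ⟩
  have h1 := h t htT (by rw [sub_zero, abs_of_nonneg ht.1]; exact ht.2.trans_lt hτδ)
  have h2 := ((hm t htT).sub (hm 0 h0)).norm_fc_le k
  rw [fc_sub (hm t htT).1 (hm 0 h0).1] at h2
  have h3 : ‖fc (u t) k‖ ≤ ‖fc (u t) k - fc (u 0) k‖ + ‖fc (u 0) k‖ := norm_le_norm_sub_add _ _
  refine (mul_le_mul_of_nonneg_left h3 (by positivity)).trans ?_
  rw [mul_add]
  exact add_le_add (h2.trans (mul_le_mul_of_nonneg_left h1.le (by positivity)))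
    ((hm 0 h0).norm_fc_le k)

theorem exists_flow (hT : 0 < T) (hu : IsSolutionH jj γ j0 lam a b c d 0 T u)
    (hm : ∀ t ∈ Set.Icc (0 : ℝ) T, MemHs 13 (u t)) (hc : ContInHs 13 (Set.Icc (0 : ℝ) T) u)
    (hP : PN j0 lam a b c d (u 0) < 0) :
    ∃ τ > 0, Flow (dispersionRelation jj γ) (nonlinearity lam a b c d) (fun k t => fc (u t) k)
      (fun t => jet (u t)) τ ∧ Decay 13 (fun k t => fc (u t) k) τ := by
  have h0 : (0 : ℝ) ∈ Set.Icc 0 T := ⟨le_rfl, hT.le⟩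
  have hj := continuousOn_jet hu hm hc
  obtain ⟨δ₁, hδ₁, hdec⟩ := exists_decay hT hm hc
  have hF : Continuous fun v : Fin 4 → CircleFun => (coef 0 (MvPolynomial.aeval v
      (MvPolynomial.pderiv 2 (nonlinearity lam a b c d)))).re :=
    Complex.continuous_re.comp ((coef 0).continuous.comp (continuous_aeval _))
  have hlt : (coef 0 (MvPolynomial.aeval (jet (u 0))
      (MvPolynomial.pderiv 2 (nonlinearity lam a b c d)))).re < PN j0 lam a b c d (u 0) / 2 := by
    rw [coef_pderiv_nonlinearity (hu.1 0 h0).1 (hu.1 0 h0).2]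
    linarith
  obtain ⟨ε, hε, hball⟩ := Metric.eventually_nhds_iff.mp
    (hF.continuousAt.eventually_lt continuousAt_const hlt)
  obtain ⟨δ₂, hδ₂, hnear⟩ := Metric.continuousOn_iff.mp hj 0 h0 (ε / 2) (half_pos hε)
  set τ := min T (min δ₁ δ₂ / 2) with hτ
  have hδ : 0 < min δ₁ δ₂ := lt_min hδ₁ hδ₂
  have hτT : τ ≤ T := min_le_left _ _
  have hτδ : τ < min δ₁ δ₂ := (min_le_right _ _).trans_lt (half_lt_self hδ)
  have hI : Set.Icc 0 τ ⊆ Set.Icc 0 T := Set.Icc_subset_Icc_right hτT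
  refine ⟨τ, lt_min hT (half_pos hδ), ⟨fun t ht l k => ?_, fun t _ l => star_toCircle _,
    fun k => (continuousOn_fc hu hm hc k).mono hI, fun t ht k =>
      hasDerivAt_fc hT hu hm hc (Set.Ioo_subset_Ioo_right hτT ht) k,
    ε / 2, half_pos hε, -(PN j0 lam a b c d (u 0) / 2), by linarith, fun t ht v hv => ?_⟩,
    hdec τ hτT (hτδ.trans_le (min_le_left _ _))⟩
  · exact coef_jet (hu.1 t (hI ht)).1 (hu.1 t (hI ht)).2 l k
  · rw [neg_neg]
    refine (hball ?_).le
    have h1 : dist v (jet (u t)) < ε / 2 :=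
      (dist_pi_lt_iff (half_pos hε)).mpr fun l => by rw [dist_eq_norm]; exact hv l
    have h2 := hnear t (hI ht) (by
      rw [Real.dist_eq, sub_zero, abs_of_nonneg ht.1]
      exact ht.2.trans_lt (hτδ.trans_le (min_le_right _ _)))
    linarith [dist_triangle v (jet (u t)) (jet (u 0))]

theorem iteratedDeriv_const_mul_exp (z c : ℂ) (n : ℕ) :
    iteratedDeriv n (fun x : ℝ => z * Complex.exp (c * x)) =
      fun x : ℝ => c ^ n * (z * Complex.exp (c * x)) := by
  induction n with
  | zero => simp
  | succ n ih =>
    rw [iteratedDeriv_succ, ih]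
    funext x
    have h : HasDerivAt (fun x : ℝ => Complex.exp (c * x)) (Complex.exp (c * x) * c) x := by
      simpa using (((hasDerivAt_id (x : ℂ)).const_mul c).cexp).comp_ofReal
    rw [((h.const_mul z).const_mul (c ^ n)).deriv]
    ring

theorem contDiff_of_decay (hf : Continuous f) (hp : Function.Periodic f (2 * Real.pi))
    (h : ∀ n : ℕ, ∃ C, ∀ k : ℤ, (1 + |(k : ℝ)|) ^ n * ‖fc f k‖ ≤ C) :
    ContDiff ℝ (⊤ : ℕ∞) f := by
  have hs (n : ℕ) : Summable fun k : ℤ => |(k : ℝ)| ^ n * ‖fc f k‖ := by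
    obtain ⟨C, hC⟩ := h (n + 2)
    refine Summable.of_nonneg_of_le (fun k => by positivity) (fun k => ?_)
      (summable_inv_sq_weight.mul_left C)
    rw [← div_eq_mul_inv, le_div_iff₀ (by positivity)]
    refine le_trans ?_ (hC k)
    rw [pow_add, mul_right_comm]
    gcongr
    exact le_add_of_nonneg_left zero_le_one
  have hsum (x : ℝ) : HasSum (fun k : ℤ => fc f k * Complex.exp (Complex.I * k * x)) (f x) := by
    have h1 := has_pointwise_sum_fourier_series_of_summable (f := toCircle f)
      (Summable.of_norm (by simpa [← coef_apply, coef_toCircle hf hp] using hs 0)) x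
    rw [toCircle_coe hf hp] at h1
    convert h1 using 1
    funext k
    rw [← coef_apply, coef_toCircle hf hp, fourier_coe_apply, smul_eq_mul]
    congr 2
    have : (Real.pi : ℂ) ≠ 0 := Complex.ofReal_ne_zero.mpr Real.pi_ne_zero
    push_cast
    field_simp
  have hcd : ContDiff ℝ (⊤ : ℕ∞) fun x : ℝ =>
      ∑' k : ℤ, fc f k * Complex.exp (Complex.I * k * x) := by
    refine contDiff_tsum (N := ⊤) (v := fun (n : ℕ) (k : ℤ) => |(k : ℝ)| ^ n * ‖fc f k‖)
      (fun k => ?_) (fun n _ => hs n) fun n k x _ => ?_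
    · exact contDiff_const.mul
        (Complex.contDiff_exp.comp (contDiff_const.mul Complex.ofRealCLM.contDiff))
    · rw [norm_iteratedFDeriv_eq_norm_iteratedDeriv, iteratedDeriv_const_mul_exp]
      have : Complex.I * k * x = ((k * x : ℝ) : ℂ) * Complex.I := by push_cast; ring
      beta_reduce
      rw [this, norm_mul, norm_mul, Complex.norm_exp_ofReal_mul_I, norm_pow, norm_mul,
        Complex.norm_I, one_mul, mul_one, Complex.norm_intCast]
  have := Complex.reCLM.contDiff.comp hcd
  convert this using 1
  funext x
  simp [(hsum x).tsum_eq]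

end

/-- **Non-existence for parabolic resonance type, `(2j+1)`-st order equations.**
Let `j ≥ 3`, `γ₀,…,γ_j ∈ ℝ` with `γ₀ ≠ 0`. If `φ ∈ H^{13}(𝕋)` is real-valued, not `C^∞`,
and `P_N(φ) < 0`, then for every `T > 0` there is no solution `u ∈ C([0,T];H^{13}(𝕋))`
of the `(2j+1)`-st order equation with `u(0) = φ`. -/
theorem nonexistence_parabolic_higher_order
    (jj : ℕ) (hjj : 3 ≤ jj) (γ : ℕ → ℝ) (hγ0 : γ 0 ≠ 0)
    (j0 : ℕ) (lam : Fin j0 → ℝ) (a b c d : Fin j0 → ℕ)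
    (hp : ∀ j : Fin j0, 2 ≤ a j + b j + c j + d j)
    (φ : ℝ → ℝ) (hφ : MemHs 13 φ)
    (hφns : ¬ ContDiff ℝ (⊤ : ℕ∞) φ)
    (hPNφ : PN j0 lam a b c d φ < 0) :
    ∀ T : ℝ, 0 < T →
      ¬ ∃ u : ℝ → ℝ → ℝ,
          u 0 = φ ∧
          IsSolutionH jj γ j0 lam a b c d 0 T u ∧
          (∀ t ∈ Set.Icc (0:ℝ) T, MemHs 13 (u t)) ∧
          ContInHs 13 (Set.Icc (0:ℝ) T) u := by
  rintro T hT ⟨u, rfl, hu, hm, hc⟩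
  obtain ⟨τ, hτ, hflow, hdec⟩ := exists_flow hT hu hm hc hPNφ
  refine hφns (contDiff_of_decay hφ.1 hφ.2.1 fun n => ?_)
  obtain ⟨C, hC⟩ := hflow.decay_all hjj (dispersive_dispersionRelation hγ0) hdec n 0 hτ
  refine ⟨C, fun k => le_trans ?_ (hC 0 (Set.left_mem_Icc.mpr le_rfl) k)⟩
  gcongr
  · exact le_add_of_nonneg_right (abs_nonneg _)
  · exact Nat.le_add_right _ _

end FifthOrderStmt5
end

section
/- (Gagliardo–Nirenberg inequality for periodic functions.) Let l, m be integers with 0 ≤ l ≤ m−1 and m ≥ 1, let 2 ≤ p ≤ ∞, and set α := (l + 1/2 − 1/p)/m (with the convention 1/p = 0 when p = ∞). Then there exists a constant C > 0, depending only on l, m, p, such that for every m-times continuously differentiable function f : 𝕋 → ℂ: if 1 ≤ l ≤ m−1 then ‖∂_x^l f‖_{L^p} ≤ C ‖f‖_{L²}^{1−α} ‖∂_x^m f‖_{L²}^{α}, and if l = 0 then ‖f‖_{L^p} ≤ C (‖f‖_{L²}^{1−α} ‖∂_x^m f‖_{L²}^{α} + ‖f‖_{L²}). -/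
/- Gagliardo–Nirenberg inequality for 2π-periodic functions. -/

namespace FifthOrderStmt9

/-- `L^p` norm on the circle with respect to the normalized measure `dx/2π`
(`sup` norm for `p = ∞`). -/
noncomputable def lpNorm (p : ENNReal) (f : ℝ → ℂ) : ℝ :=
  if p = ⊤ then ⨆ x : ℝ, ‖f x‖
  else ((2 * Real.pi)⁻¹ * ∫ x in (0:ℝ)..(2 * Real.pi), ‖f x‖ ^ p.toReal) ^ (1 / p.toReal)

open MeasureTheory intervalIntegral Set

lemma lpNorm_nonneg (p : ENNReal) (f : ℝ → ℂ) : 0 ≤ lpNorm p f := by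
  unfold lpNorm
  split_ifs
  · exact Real.iSup_nonneg fun _ => norm_nonneg _
  · have : 0 ≤ ∫ x in (0:ℝ)..(2 * Real.pi), ‖f x‖ ^ p.toReal :=
      integral_nonneg Real.two_pi_pos.le fun _ _ => by positivity
    positivity

lemma lpNorm_two_eq_sqrt (f : ℝ → ℂ) :
    lpNorm 2 f = √((2 * Real.pi)⁻¹ * ∫ x in (0:ℝ)..(2 * Real.pi), ‖f x‖ ^ 2) := by
  simp [lpNorm, Real.sqrt_eq_rpow]

lemma integral_norm_sq_eq (f : ℝ → ℂ) :
    ∫ x in (0:ℝ)..(2 * Real.pi), ‖f x‖ ^ 2 = 2 * Real.pi * lpNorm 2 f ^ 2 := by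
  have : 0 ≤ ∫ x in (0:ℝ)..(2 * Real.pi), ‖f x‖ ^ 2 :=
    integral_nonneg Real.two_pi_pos.le fun _ _ => by positivity
  rw [lpNorm_two_eq_sqrt, Real.sq_sqrt (by positivity), mul_inv_cancel_left₀ Real.two_pi_pos.ne']

lemma integral_norm_mul_norm_le {g h : ℝ → ℂ} (hg : Continuous g) (hh : Continuous h) :
    ∫ x in (0:ℝ)..(2 * Real.pi), ‖g x‖ * ‖h x‖ ≤ 2 * Real.pi * (lpNorm 2 g * lpNorm 2 h) := by
  have key : ∀ t : ℝ, 0 ≤ lpNorm 2 g ^ 2 * (2 * Real.pi) * (t * t)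
      + (-2 * ∫ x in (0:ℝ)..(2 * Real.pi), ‖g x‖ * ‖h x‖) * t
      + lpNorm 2 h ^ 2 * (2 * Real.pi) := by
    intro t
    have h0 : 0 ≤ ∫ x in (0:ℝ)..(2 * Real.pi), (t * ‖g x‖ - ‖h x‖) ^ 2 :=
      integral_nonneg Real.two_pi_pos.le fun _ _ => by positivity
    have h1 : ∫ x in (0:ℝ)..(2 * Real.pi), (t * ‖g x‖ - ‖h x‖) ^ 2
        = ∫ x in (0:ℝ)..(2 * Real.pi),
          (t ^ 2 * ‖g x‖ ^ 2 - 2 * t * (‖g x‖ * ‖h x‖) + ‖h x‖ ^ 2) := by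
      congr 1; ext x; ring
    rw [h1, integral_add (Continuous.intervalIntegrable (by fun_prop) _ _)
      (Continuous.intervalIntegrable (by fun_prop) _ _),
      integral_sub (Continuous.intervalIntegrable (by fun_prop) _ _)
      (Continuous.intervalIntegrable (by fun_prop) _ _), intervalIntegral.integral_const_mul,
      intervalIntegral.integral_const_mul, integral_norm_sq_eq, integral_norm_sq_eq] at h0
    linarith
  have hd := discrim_le_zero key
  rw [discrim] at hd
  have := Real.two_pi_pos
  have := lpNorm_nonneg 2 g
  have := lpNorm_nonneg 2 h
  refine abs_le_of_sq_le_sq' ?_ (by positivity) |>.2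
  nlinarith

/-- Integration by parts: `‖g'‖² ≤ ‖g‖ ‖g''‖` for periodic `g`. -/
lemma lpNorm_two_deriv_sq_le {g g' g'' : ℝ → ℂ} (h1 : ∀ x, HasDerivAt g (g' x) x)
    (h2 : ∀ x, HasDerivAt g' (g'' x) x) (hc : Continuous g'')
    (hp : Function.Periodic g (2 * Real.pi)) (hp' : Function.Periodic g' (2 * Real.pi)) :
    lpNorm 2 g' ^ 2 ≤ lpNorm 2 g * lpNorm 2 g'' := by
  have c0 : Continuous g := continuous_iff_continuousAt.2 fun x => (h1 x).continuousAt
  have c1 : Continuous g' := continuous_iff_continuousAt.2 fun x => (h2 x).continuousAt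
  have hI : ∫ x in (0:ℝ)..(2 * Real.pi), (inner ℝ (g x) (g'' x) + inner ℝ (g' x) (g' x)) = 0 := by
    rw [integral_eq_sub_of_hasDerivAt (fun x _ => (h1 x).inner ℝ (h2 x))
      (Continuous.intervalIntegrable (by fun_prop) _ _)]
    have e0 := hp 0
    have e1 := hp' 0
    rw [zero_add] at e0 e1
    rw [e0, e1, sub_self]
  rw [integral_add (Continuous.intervalIntegrable (by fun_prop) _ _)
      (Continuous.intervalIntegrable (by fun_prop) _ _)] at hI
  simp_rw [real_inner_self_eq_norm_sq] at hI
  rw [integral_norm_sq_eq] at hI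
  have hle : -∫ x in (0:ℝ)..(2 * Real.pi), inner ℝ (g x) (g'' x)
      ≤ ∫ x in (0:ℝ)..(2 * Real.pi), ‖g x‖ * ‖g'' x‖ := by
    rw [← intervalIntegral.integral_neg]
    refine integral_mono_on Real.two_pi_pos.le (Continuous.intervalIntegrable (by fun_prop) _ _)
      (Continuous.intervalIntegrable (by fun_prop) _ _) fun x _ => ?_
    exact (neg_le_abs _).trans (abs_real_inner_le_norm _ _)
  have := integral_norm_mul_norm_le c0 hc
  have := Real.two_pi_pos
  exact le_of_mul_le_mul_left (by linarith) this

lemma norm_sub_le_integral_norm_deriv {E : Type*} [NormedAddCommGroup E] [NormedSpace ℝ E]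
    [CompleteSpace E] {F F' : ℝ → E} {a b : ℝ} (h : ∀ x, HasDerivAt F (F' x) x)
    (hc : Continuous F') (hab : a ≤ b) {x y : ℝ} (hx : x ∈ Icc a b) (hy : y ∈ Icc a b) :
    ‖F x - F y‖ ≤ ∫ t in a..b, ‖F' t‖ := by
  rw [← integral_eq_sub_of_hasDerivAt (fun x _ => h x) (hc.intervalIntegrable y x),
    integral_of_le hab]
  refine (norm_integral_le_integral_norm_uIoc).trans ?_
  refine setIntegral_mono_set ?_ (Filter.Eventually.of_forall fun _ => norm_nonneg _) ?_
  · exact (hc.norm.integrableOn_Icc (a := a) (b := b)).mono_set Ioc_subset_Icc_self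
  · exact LE.le.eventuallyLE
      (Ioc_subset_Ioc (le_min hy.1 hx.1) (max_le hy.2 hx.2))

/-- Agmon's inequality on the circle. -/
lemma norm_sq_le_of_periodic {g g' : ℝ → ℂ} (h1 : ∀ x, HasDerivAt g (g' x) x)
    (hc : Continuous g') (hp : Function.Periodic g (2 * Real.pi)) (x : ℝ) :
    ‖g x‖ ^ 2 ≤ lpNorm 2 g ^ 2 + 4 * Real.pi * (lpNorm 2 g * lpNorm 2 g') := by
  have c0 : Continuous g := continuous_iff_continuousAt.2 fun x => (h1 x).continuousAt
  obtain ⟨z, hz, hxz⟩ := hp.exists_mem_Ico₀ Real.two_pi_pos x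
  rw [hxz]
  have hd : ∀ x, HasDerivAt (fun t => ‖g t‖ ^ 2) (2 * inner ℝ (g x) (g' x)) x :=
    fun x => (h1 x).norm_sq
  have hK : ∫ t in (0:ℝ)..(2 * Real.pi), ‖2 * inner ℝ (g t) (g' t)‖
      ≤ 4 * Real.pi * (lpNorm 2 g * lpNorm 2 g') := by
    calc _ ≤ ∫ t in (0:ℝ)..(2 * Real.pi), 2 * (‖g t‖ * ‖g' t‖) := by
          refine integral_mono_on Real.two_pi_pos.le
            (Continuous.intervalIntegrable (by fun_prop) _ _)
            (Continuous.intervalIntegrable (by fun_prop) _ _) fun x _ => ?_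
          rw [norm_mul, Real.norm_two]
          gcongr
          exact abs_real_inner_le_norm _ _
      _ ≤ _ := by
          rw [intervalIntegral.integral_const_mul]
          linarith [integral_norm_mul_norm_le c0 hc]
  have hm : ∫ _y in (0:ℝ)..(2 * Real.pi),
      (‖g z‖ ^ 2 - 4 * Real.pi * (lpNorm 2 g * lpNorm 2 g'))
      ≤ ∫ y in (0:ℝ)..(2 * Real.pi), ‖g y‖ ^ 2 := by
    refine integral_mono_on Real.two_pi_pos.le (Continuous.intervalIntegrable (by fun_prop) _ _)
      (Continuous.intervalIntegrable (by fun_prop) _ _) fun y hy => ?_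
    have := norm_sub_le_integral_norm_deriv hd (by fun_prop) Real.two_pi_pos.le
      (Ico_subset_Icc_self hz) hy
    have := (le_abs_self _).trans this
    linarith
  rw [integral_norm_sq_eq, intervalIntegral.integral_const, smul_eq_mul, sub_zero] at hm
  linarith [le_of_mul_le_mul_left hm Real.two_pi_pos]

/-- Poincaré's inequality on the circle. -/
lemma lpNorm_two_le_of_integral_eq_zero {g g' : ℝ → ℂ} (h1 : ∀ x, HasDerivAt g (g' x) x)
    (hc : Continuous g') (h0 : ∫ x in (0:ℝ)..(2 * Real.pi), g x = 0) :
    lpNorm 2 g ≤ 2 * Real.pi * lpNorm 2 g' := by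
  have c0 : Continuous g := continuous_iff_continuousAt.2 fun x => (h1 x).continuousAt
  have hpi := Real.two_pi_pos
  have hK : ∫ t in (0:ℝ)..(2 * Real.pi), ‖g' t‖ ≤ 2 * Real.pi * lpNorm 2 g' := by
    have := integral_norm_mul_norm_le hc (continuous_const (y := (1 : ℂ)))
    have hone : lpNorm 2 (fun _ => (1 : ℂ)) = 1 := by
      rw [lpNorm_two_eq_sqrt, norm_one, one_pow, intervalIntegral.integral_const, sub_zero,
        smul_eq_mul, mul_one, inv_mul_cancel₀ hpi.ne', Real.sqrt_one]
    simpa [hone] using this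
  have hb : ∀ x ∈ Icc (0:ℝ) (2 * Real.pi), ‖g x‖ ≤ 2 * Real.pi * lpNorm 2 g' := by
    intro x hx
    have e : ∫ y in (0:ℝ)..(2 * Real.pi), (g x - g y) = (2 * Real.pi : ℝ) • g x := by
      rw [integral_sub (by simp) (c0.intervalIntegrable _ _), h0, intervalIntegral.integral_const]
      simp
    have := norm_integral_le_of_norm_le_const (a := 0) (b := 2 * Real.pi)
      (f := fun y => g x - g y) (C := 2 * Real.pi * lpNorm 2 g') fun y hy => by
        rw [uIoc_of_le hpi.le] at hy
        exact (norm_sub_le_integral_norm_deriv h1 hc hpi.le hx (Ioc_subset_Icc_self hy)).trans hK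
    rw [e, norm_smul, sub_zero, Real.norm_eq_abs, abs_of_pos hpi, mul_comm] at this
    exact le_of_mul_le_mul_right this hpi
  have hm : ∫ y in (0:ℝ)..(2 * Real.pi), ‖g y‖ ^ 2
      ≤ ∫ _y in (0:ℝ)..(2 * Real.pi), (2 * Real.pi * lpNorm 2 g') ^ 2 :=
    integral_mono_on hpi.le (Continuous.intervalIntegrable (by fun_prop) _ _)
      (Continuous.intervalIntegrable (by fun_prop) _ _) fun y hy => by
        gcongr
        exact hb y hy
  rw [integral_norm_sq_eq, intervalIntegral.integral_const, smul_eq_mul, sub_zero] at hm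
  exact le_of_sq_le_sq (le_of_mul_le_mul_left hm hpi) (by have := lpNorm_nonneg 2 g'; positivity)

/-- Interpolation of `L^p` between `L²` and `L^∞`. -/
lemma lpNorm_le_of_norm_le {g : ℝ → ℂ} (hg : Continuous g) {p : ENNReal} (hp : 2 ≤ p) {M : ℝ}
    (hM : ∀ x, ‖g x‖ ≤ M) :
    lpNorm p g ≤ M ^ (1 - 2 * (p⁻¹).toReal) * lpNorm 2 g ^ (2 * (p⁻¹).toReal) := by
  have hM0 : 0 ≤ M := (norm_nonneg _).trans (hM 0)
  have hpi := Real.two_pi_pos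
  have hA := lpNorm_nonneg 2 g
  by_cases h : p = ⊤
  · simpa [lpNorm, h] using ciSup_le hM
  have hq : 2 ≤ p.toReal := by
    simpa using ENNReal.toReal_mono h hp
  rw [ENNReal.toReal_inv]
  set q := p.toReal
  have hI : ∫ x in (0:ℝ)..(2 * Real.pi), ‖g x‖ ^ q
      ≤ ∫ x in (0:ℝ)..(2 * Real.pi), M ^ (q - 2) * ‖g x‖ ^ 2 := by
    refine integral_mono_on hpi.le ?_
      (Continuous.intervalIntegrable (by fun_prop) _ _) fun x _ => ?_
    · exact (hg.norm.rpow_const fun _ => Or.inr (by linarith)).intervalIntegrable _ _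
    · calc ‖g x‖ ^ q = ‖g x‖ ^ (q - 2) * ‖g x‖ ^ 2 := by
            rw [← Real.rpow_natCast, ← Real.rpow_add_of_nonneg (norm_nonneg _) (by linarith)
              (by norm_num)]
            norm_num
        _ ≤ _ := by
            gcongr
            exact hM x
  rw [intervalIntegral.integral_const_mul, integral_norm_sq_eq] at hI
  have h0 : 0 ≤ ∫ x in (0:ℝ)..(2 * Real.pi), ‖g x‖ ^ q :=
    integral_nonneg hpi.le fun _ _ => by positivity
  have hI' : (2 * Real.pi)⁻¹ * ∫ x in (0:ℝ)..(2 * Real.pi), ‖g x‖ ^ q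
      ≤ M ^ (q - 2) * lpNorm 2 g ^ 2 := by
    rw [inv_mul_le_iff₀ hpi]
    linarith
  have hu : lpNorm p g
      = ((2 * Real.pi)⁻¹ * ∫ x in (0:ℝ)..(2 * Real.pi), ‖g x‖ ^ q) ^ (1 / q) := by
    rw [lpNorm, if_neg h]
  rw [hu]
  refine (Real.rpow_le_rpow (by positivity) hI' (by positivity)).trans_eq ?_
  rw [Real.mul_rpow (by positivity) (by positivity), ← Real.rpow_mul hM0, ← Real.rpow_natCast,
    ← Real.rpow_mul hA]
  have : q ≠ 0 := by linarith
  congr 2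
  · field_simp
  · push_cast; field_simp

lemma pow_le_of_sq_le_mul_of_le {A : ℕ → ℝ} (h0 : ∀ k, 0 ≤ A k) {m : ℕ}
    (h : ∀ k, k + 2 ≤ m → A (k + 1) ^ 2 ≤ A k * A (k + 2)) {k : ℕ} (hk : k + 1 ≤ m) :
    A k ^ (k + 1) ≤ A 0 * A (k + 1) ^ k := by
  induction k with
  | zero => simp
  | succ k ih =>
    rcases (h0 (k + 1)).eq_or_lt with hz | hz
    · rw [← hz, zero_pow (by lia)]
      exact mul_nonneg (h0 _) (pow_nonneg (h0 _) _)
    · have i := ih (by lia)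
      refine le_of_mul_le_mul_right ?_ (pow_pos hz k)
      calc A (k + 1) ^ (k + 1 + 1) * A (k + 1) ^ k = (A (k + 1) ^ 2) ^ (k + 1) := by ring
        _ ≤ (A k * A (k + 2)) ^ (k + 1) := by gcongr; exact h k (by lia)
        _ = A k ^ (k + 1) * A (k + 2) ^ (k + 1) := by ring
        _ ≤ (A 0 * A (k + 1) ^ k) * A (k + 2) ^ (k + 1) := by
          gcongr
          exact pow_nonneg (h0 _) _
        _ = _ := by ring

/-- Interpolation for log-convex sequences. -/
lemma le_rpow_mul_rpow_of_sq_le_mul {A : ℕ → ℝ} (h0 : ∀ k, 0 ≤ A k) {m : ℕ} (hm : 1 ≤ m)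
    (h : ∀ k, k + 2 ≤ m → A (k + 1) ^ 2 ≤ A k * A (k + 2)) {k : ℕ} (hk : k ≤ m) :
    A k ≤ A 0 ^ (1 - (k : ℝ) / m) * A m ^ ((k : ℝ) / m) := by
  have key : ∀ d, k + d ≤ m → A k ^ (k + d) ≤ A 0 ^ d * A (k + d) ^ k := by
    intro d
    induction d with
    | zero => simp
    | succ d ih =>
      intro hd
      have i := ih (by lia)
      rcases Nat.eq_zero_or_pos (k + d) with hz | hz
      · obtain ⟨rfl, rfl⟩ : k = 0 ∧ d = 0 := by lia
        simp
      refine le_of_pow_le_pow_left₀ hz.ne' (mul_nonneg (pow_nonneg (h0 _) _) (pow_nonneg (h0 _) _)) ?_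
      have a0 := h0 0
      have a1 := h0 (k + d)
      have a2 := h0 (k + d + 1)
      have a3 := h0 k
      calc (A k ^ (k + (d + 1))) ^ (k + d) = (A k ^ (k + d)) ^ (k + d + 1) := by ring
        _ ≤ (A 0 ^ d * A (k + d) ^ k) ^ (k + d + 1) := by gcongr
        _ = (A 0 ^ d) ^ (k + d + 1) * (A (k + d) ^ (k + d + 1)) ^ k := by ring
        _ ≤ (A 0 ^ d) ^ (k + d + 1) * (A 0 * A (k + d + 1) ^ (k + d)) ^ k := by
          gcongr
          exact pow_le_of_sq_le_mul_of_le h0 h (by lia)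
        _ = (A 0 ^ (d + 1) * A (k + (d + 1)) ^ k) ^ (k + d) := by
          rw [← add_assoc]; ring
  obtain ⟨d, rfl⟩ := Nat.exists_eq_add_of_le hk
  have hk' := key d le_rfl
  have hr : (0 : ℝ) < ((k + d : ℕ) : ℝ) := by exact_mod_cast hm
  have a0 := h0 0
  have a1 := h0 (k + d)
  refine le_of_pow_le_pow_left₀ (n := k + d) (by lia) (by positivity) (hk'.trans_eq ?_)
  rw [mul_pow, ← Real.rpow_mul_natCast a0, ← Real.rpow_mul_natCast a1, sub_mul,
    div_mul_cancel₀ _ hr.ne', Real.rpow_natCast]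
  rw [show 1 * ((k + d : ℕ) : ℝ) - k = (d : ℕ) by push_cast; ring, Real.rpow_natCast]

lemma rpow_mul_rpow_le_of_interpolation {A₀ A B D : ℝ} (hA₀ : 0 ≤ A₀) (hA : 0 ≤ A) (hB : 0 ≤ B)
    (hD : 0 ≤ D) {m l t : ℝ} (hm : 0 < m) (hl : 0 ≤ l) (hlm : l + 1 ≤ m) (ht : 0 ≤ t)
    (ht' : t ≤ 1 / 2)
    (h1 : A ≤ A₀ ^ (1 - l / m) * D ^ (l / m))
    (h2 : B ≤ A₀ ^ (1 - (l + 1) / m) * D ^ ((l + 1) / m)) :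
    A ^ (1 / 2 + t) * B ^ (1 / 2 - t)
      ≤ A₀ ^ (1 - (l + 1 / 2 - t) / m) * D ^ ((l + 1 / 2 - t) / m) := by
  have e1 : 0 ≤ 1 - l / m := sub_nonneg.2 ((div_le_one hm).2 (by linarith))
  have e2 : 0 ≤ 1 - (l + 1) / m := sub_nonneg.2 ((div_le_one hm).2 hlm)
  have e3 : 0 ≤ 1 / 2 - t := by linarith
  calc _ ≤ (A₀ ^ (1 - l / m) * D ^ (l / m)) ^ (1 / 2 + t)
        * (A₀ ^ (1 - (l + 1) / m) * D ^ ((l + 1) / m)) ^ (1 / 2 - t) := by gcongr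
    _ = (A₀ ^ ((1 - l / m) * (1 / 2 + t)) * A₀ ^ ((1 - (l + 1) / m) * (1 / 2 - t)))
        * (D ^ (l / m * (1 / 2 + t)) * D ^ ((l + 1) / m * (1 / 2 - t))) := by
      rw [Real.mul_rpow (by positivity) (by positivity),
        Real.mul_rpow (by positivity) (by positivity), ← Real.rpow_mul hA₀, ← Real.rpow_mul hA₀,
        ← Real.rpow_mul hD, ← Real.rpow_mul hD]
      ring
    _ = _ := by
      rw [← Real.rpow_add_of_nonneg hA₀ (by positivity) (by positivity),
        ← Real.rpow_add_of_nonneg hD (by positivity) (by positivity)]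
      congr 2 <;> field_simp <;> ring

lemma sqrt_rpow_mul_rpow_le {K A B t : ℝ} (hK : 1 ≤ K) (hA : 0 ≤ A) (hB : 0 ≤ B) (ht : 0 ≤ t)
    (ht' : t ≤ 1 / 2) :
    √(K * (A * B)) ^ (1 - 2 * t) * A ^ (2 * t) ≤ K * (A ^ (1 / 2 + t) * B ^ (1 / 2 - t)) := by
  have hK0 : 0 ≤ K := by linarith
  have e3 : 0 ≤ 1 / 2 - t := by linarith
  have hKle : K ^ (1 / 2 - t) ≤ K := by
    simpa using Real.rpow_le_rpow_of_exponent_le hK (show 1 / 2 - t ≤ 1 by linarith)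
  rw [Real.sqrt_eq_rpow, ← Real.rpow_mul (by positivity),
    show 1 / 2 * (1 - 2 * t) = 1 / 2 - t by ring, Real.mul_rpow hK0 (by positivity),
    Real.mul_rpow hA hB, show 1 / 2 + t = (1 / 2 - t) + 2 * t by ring,
    Real.rpow_add_of_nonneg hA e3 (by positivity)]
  calc _ = K ^ (1 / 2 - t) * (A ^ (1 / 2 - t) * A ^ (2 * t) * B ^ (1 / 2 - t)) := by ring
    _ ≤ _ := by gcongr

lemma _root_.Function.Periodic.iteratedDeriv {E : Type*} [NormedAddCommGroup E] [NormedSpace ℝ E]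
    {f : ℝ → E} {c : ℝ} (hf : Function.Periodic f c) (n : ℕ) :
    Function.Periodic (iteratedDeriv n f) c := by
  intro x
  have := congrFun (iteratedDeriv_comp_add_const n f c) x
  rw [funext hf] at this
  exact this.symm

/-- **Gagliardo–Nirenberg inequality for periodic functions.** Let `0 ≤ l ≤ m-1`, `m ≥ 1`,
`2 ≤ p ≤ ∞`, and `α = (l + 1/2 − 1/p)/m`. There is `C > 0` (depending only on `l, m, p`)
such that for every `2π`-periodic `C^m` function `f : ℝ → ℂ`:
if `1 ≤ l` then `‖∂_x^l f‖_{L^p} ≤ C ‖f‖_{L²}^{1-α} ‖∂_x^m f‖_{L²}^α`, and if `l = 0` then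
`‖f‖_{L^p} ≤ C (‖f‖_{L²}^{1-α} ‖∂_x^m f‖_{L²}^α + ‖f‖_{L²})`. -/
theorem gagliardo_nirenberg_periodic (l m : ℕ) (hm : 1 ≤ m) (hl : l ≤ m - 1)
    (p : ENNReal) (hp : 2 ≤ p) :
    ∃ C : ℝ, 0 < C ∧ ∀ f : ℝ → ℂ,
      Function.Periodic f (2 * Real.pi) → ContDiff ℝ (m : ℕ∞) f →
      ((1 ≤ l →
        lpNorm p (iteratedDeriv l f)
          ≤ C * lpNorm 2 f ^ (1 - ((l : ℝ) + 1/2 - (p⁻¹).toReal) / (m : ℝ))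
              * lpNorm 2 (iteratedDeriv m f) ^ (((l : ℝ) + 1/2 - (p⁻¹).toReal) / (m : ℝ))) ∧
       (l = 0 →
        lpNorm p f
          ≤ C * (lpNorm 2 f ^ (1 - ((l : ℝ) + 1/2 - (p⁻¹).toReal) / (m : ℝ))
              * lpNorm 2 (iteratedDeriv m f) ^ (((l : ℝ) + 1/2 - (p⁻¹).toReal) / (m : ℝ))
              + lpNorm 2 f))) := by
  set t := (p⁻¹).toReal with ht_def
  have ht : 0 ≤ t := ENNReal.toReal_nonneg
  have ht' : t ≤ 1 / 2 := by
    have := ENNReal.toReal_mono (by simp) (ENNReal.inv_le_inv.2 hp)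
    simpa [ht_def] using this
  have hpi := Real.pi_gt_three
  refine ⟨6 * Real.pi, by positivity, fun f hper hf => ?_⟩
  have hder : ∀ k, k < m → ∀ x,
      HasDerivAt (iteratedDeriv k f) (iteratedDeriv (k + 1) f x) x := fun k hk x => by
    rw [iteratedDeriv_succ]
    exact (hf.differentiable_iteratedDeriv k (by exact_mod_cast hk) x).hasDerivAt
  have hcont : ∀ k, k ≤ m → Continuous (iteratedDeriv k f) := fun k hk =>
    hf.continuous_iteratedDeriv k (by exact_mod_cast hk)
  have hA : ∀ k, 0 ≤ lpNorm 2 (iteratedDeriv k f) := fun _ => lpNorm_nonneg _ _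
  have hconv : ∀ k, k ≤ m → _ := fun k hk =>
    le_rpow_mul_rpow_of_sq_le_mul (A := fun k => lpNorm 2 (iteratedDeriv k f)) hA hm
      (fun k hk => lpNorm_two_deriv_sq_le (hder k (by lia)) (hder (k + 1) (by lia))
        (hcont _ hk) (hper.iteratedDeriv k) (hper.iteratedDeriv (k + 1))) hk
  simp only [iteratedDeriv_zero] at hconv
  have hlm : l + 1 ≤ m := by lia
  have hint := rpow_mul_rpow_le_of_interpolation (lpNorm_nonneg 2 f) (hA l) (hA (l + 1)) (hA m)
    (m := m) (l := l) (t := t) (by exact_mod_cast hm) (by positivity) (by exact_mod_cast hlm)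
    ht ht' (hconv l (by lia)) (by exact_mod_cast hconv (l + 1) hlm)
  have hag := norm_sq_le_of_periodic (hder l hlm) (hcont _ hlm) (hper.iteratedDeriv l)
  have hAB : 0 ≤ lpNorm 2 (iteratedDeriv l f) * lpNorm 2 (iteratedDeriv (l + 1) f) :=
    mul_nonneg (hA _) (hA _)
  have hsq := sqrt_rpow_mul_rpow_le (K := 6 * Real.pi) (by linarith) (hA l) (hA (l + 1)) ht ht'
  have hsq' := hsq.trans (mul_le_mul_of_nonneg_left hint (by positivity))
  refine ⟨fun hl1 => ?_, fun hl0 => ?_⟩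
  · obtain ⟨j, rfl⟩ := Nat.exists_eq_add_of_le' hl1
    have hmean : ∫ x in (0:ℝ)..(2 * Real.pi), iteratedDeriv (j + 1) f x = 0 := by
      rw [integral_eq_sub_of_hasDerivAt (fun x _ => hder j (by lia) x)
        ((hcont _ (by lia)).intervalIntegrable _ _)]
      have := hper.iteratedDeriv j 0
      rw [zero_add] at this
      rw [this, sub_self]
    have hpo := lpNorm_two_le_of_integral_eq_zero (hder _ hlm) (hcont _ hlm) hmean
    have hM : ∀ x, ‖iteratedDeriv (j + 1) f x‖ ≤ √(6 * Real.pi *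
        (lpNorm 2 (iteratedDeriv (j + 1) f) * lpNorm 2 (iteratedDeriv (j + 1 + 1) f))) := by
      intro x
      refine Real.le_sqrt_of_sq_le ((hag x).trans ?_)
      have := mul_le_mul_of_nonneg_left hpo (hA (j + 1))
      linarith
    rw [mul_assoc]
    exact (lpNorm_le_of_norm_le (hcont _ (by lia)) hp hM).trans hsq'
  · subst hl0
    simp only [iteratedDeriv_zero, zero_add] at hag hAB hsq' ⊢
    have hA0 := lpNorm_nonneg 2 f
    have hM : ∀ x, ‖f x‖ ≤ lpNorm 2 f
        + √(6 * Real.pi * (lpNorm 2 f * lpNorm 2 (iteratedDeriv 1 f))) := by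
      intro x
      refine abs_le_of_sq_le_sq ?_ (by positivity) |>.trans' (le_abs_self _)
      have e := Real.sq_sqrt (show 0 ≤ 6 * Real.pi * (lpNorm 2 f * lpNorm 2 (iteratedDeriv 1 f))
        by positivity)
      have := hag x
      have : 0 ≤ lpNorm 2 f * √(6 * Real.pi * (lpNorm 2 f * lpNorm 2 (iteratedDeriv 1 f))) := by
        positivity
      have : 0 ≤ Real.pi * (lpNorm 2 f * lpNorm 2 (iteratedDeriv 1 f)) := by positivity
      nlinarith
    calc lpNorm p f ≤ _ := lpNorm_le_of_norm_le hf.continuous hp hM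
      _ ≤ (lpNorm 2 f ^ (1 - 2 * t)
          + √(6 * Real.pi * (lpNorm 2 f * lpNorm 2 (iteratedDeriv 1 f))) ^ (1 - 2 * t))
            * lpNorm 2 f ^ (2 * t) := by
        gcongr
        exact Real.rpow_add_le_add_rpow hA0 (by positivity) (by linarith) (by linarith)
      _ = lpNorm 2 f + √(6 * Real.pi * (lpNorm 2 f * lpNorm 2 (iteratedDeriv 1 f))) ^ (1 - 2 * t)
            * lpNorm 2 f ^ (2 * t) := by
        rw [add_mul, ← Real.rpow_add_of_nonneg hA0 (by linarith) (by linarith)]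
        simp
      _ ≤ _ := by nlinarith

end FifthOrderStmt9
end
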